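/- For every integer n ≥ 3, as an identity in the field of rational functions ℚ(z1,z2,z3,z4), the alternative quadruply-refined ASM generating function at x = y = 1 satisfies: (z4·z1−z4+1)(z1·z2−z1+1)(z2·z3−z2+1)(z3·z4−z3+1)·Zbarqua_n(1,1;z1,z2,z3,z4) = ( z1·z2·z3·z4 / ( A_{n−2}·(z1−z3)(z2−z4) ) )·( (z1z2−z1+1)(z1z2−z2+1)(z3z4−z3+1)(z3z4−z4+1)·Zopp_{n−1}(1,1;z4,z1)·Zopp_{n−1}(1,1;z2,z3) − (z4z1−z4+1)(z4z1−z1+1)(z2z3−z2+1)(z2z3−z3+1)·Zopp_{n−1}(1,1;z1,z2)·Zopp_{n−1}(1,1;z3,z4) ) + (z2−1)(z3−1)(z1z2−z1+1)(z3z4−z3+1)·z4·z1·z2^{n−1}·Zopp_{n−1}(1,1;z4,z1) + (z3−1)(z4−1)(z2z3−z2+1)(z4z1−z4+1)·z1·z2·z3^{n−1}·Zopp_{n−1}(1,1;z1,z2) + (z4−1)(z1−1)(z3z4−z3+1)(z1z2−z1+1)·z2·z3·z4^{n−1}·Zopp_{n−1}(1,1;z2,z3) + (z1−1)(z2−1)(z4z1−z4+1)(z2z3−z2+1)·z3·z4·z1^{n−1}·Zopp_{n−1}(1,1;z3,z4)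 + (z1−1)(z2−1)(z3−1)(z4−1)·( (z1z2−z1+1)(z3z4−z3+1)·(z2·z4)^{n−1} + (z2z3−z2+1)(z4z1−z4+1)·(z1·z3)^{n−1} )·A_{n−2}, where A_m denotes the number of ASMs of size m. -/

import Mathlib

open Finset

/-- The `n × n` integer matrix encoded by `e`, with entries in `{-1, 0, 1}`. -/
def asmMat {n : ℕ} (e : Fin n → Fin n → Fin 3) : Fin n → Fin n → ℤ :=
  fun i j => (e i j : ℤ) - 1

/-- `A` is an alternating sign matrix: all entries lie in `{-1, 0, 1}`, every
partial row sum and every partial column sum is `0` or `1` (equivalently, the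
nonzero entries of each row and of each column alternate in sign), and every
complete row sum and column sum is `1`. -/
def IsASM {n : ℕ} (A : Fin n → Fin n → ℤ) : Prop :=
  (∀ i j, A i j = -1 ∨ A i j = 0 ∨ A i j = 1) ∧
  (∀ (i j : Fin n), (∑ j' ∈ univ.filter (fun j' : Fin n => j' ≤ j), A i j') = 0 ∨
    (∑ j' ∈ univ.filter (fun j' : Fin n => j' ≤ j), A i j') = 1) ∧
  (∀ (i j : Fin n), (∑ i' ∈ univ.filter (fun i' : Fin n => i' ≤ i), A i' j) = 0 ∨
    (∑ i' ∈ univ.filter (fun i' : Fin n => i' ≤ i), A i' j) = 1) ∧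
  (∀ i : Fin n, (∑ j, A i j) = 1) ∧
  (∀ j : Fin n, (∑ i, A i j) = 1)

/-- `ν(A)`, the number of generalized inversions of `A`. -/
def nuASM {n : ℕ} (A : Fin n → Fin n → ℤ) : ℕ :=
  (∑ i : Fin n, ∑ i' : Fin n, ∑ j : Fin n, ∑ j' : Fin n,
      if i < i' ∧ j' ≤ j then A i j * A i' j' else 0).toNat

/-- `μ(A)`, the number of entries of `A` equal to `-1`. -/
def muASM {n : ℕ} (A : Fin n → Fin n → ℤ) : ℕ :=
  (univ.filter (fun p : Fin n × Fin n => A p.1 p.2 = -1)).card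

/-- `ρT(A)`, the number of `0`'s to the left of the `1` in the top row of `A`. -/
def rhoT {n : ℕ} (A : Fin n → Fin n → ℤ) : ℕ :=
  (univ.filter (fun j : Fin n =>
    A ⟨0, j.pos⟩ j = 0 ∧ ∃ j' : Fin n, j < j' ∧ A ⟨0, j.pos⟩ j' = 1)).card

/-- `ρR(A)`, the number of `0`'s below the `1` in the right-most column of `A`. -/
def rhoR {n : ℕ} (A : Fin n → Fin n → ℤ) : ℕ :=
  (univ.filter (fun i : Fin n =>
    A i ⟨n - 1, Nat.sub_lt i.pos Nat.one_pos⟩ = 0 ∧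
      ∃ i' : Fin n, i' < i ∧ A i' ⟨n - 1, Nat.sub_lt i.pos Nat.one_pos⟩ = 1)).card

/-- `ρB(A)`, the number of `0`'s to the right of the `1` in the bottom row of `A`. -/
def rhoB {n : ℕ} (A : Fin n → Fin n → ℤ) : ℕ :=
  (univ.filter (fun j : Fin n =>
    A ⟨n - 1, Nat.sub_lt j.pos Nat.one_pos⟩ j = 0 ∧
      ∃ j' : Fin n, j' < j ∧ A ⟨n - 1, Nat.sub_lt j.pos Nat.one_pos⟩ j' = 1)).card

/-- `ρL(A)`, the number of `0`'s above the `1` in the left-most column of `A`. -/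
def rhoL {n : ℕ} (A : Fin n → Fin n → ℤ) : ℕ :=
  (univ.filter (fun i : Fin n =>
    A i ⟨0, i.pos⟩ = 0 ∧ ∃ i' : Fin n, i < i' ∧ A i' ⟨0, i.pos⟩ = 1)).card

open Classical in
/-- The quadruply-refined ASM generating function
`Zqua_n(x,y;z1,z2,z3,z4) = Σ_A x^{ν(A)} y^{μ(A)} z1^{ρT(A)} z2^{ρR(A)} z3^{ρB(A)} z4^{ρL(A)}`. -/
noncomputable def Zqua (n : ℕ) {R : Type*} [CommRing R] (x y z1 z2 z3 z4 : R) : R :=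
  ∑ e : Fin n → Fin n → Fin 3,
    if IsASM (asmMat e) then
      x ^ nuASM (asmMat e) * y ^ muASM (asmMat e) * z1 ^ rhoT (asmMat e) *
        z2 ^ rhoR (asmMat e) * z3 ^ rhoB (asmMat e) * z4 ^ rhoL (asmMat e)
    else 0

/-- Adjacent-boundary doubly-refined generating function `Zadj_n(x,y;z1,z2)`. -/
noncomputable def Zadj (n : ℕ) {R : Type*} [CommRing R] (x y z1 z2 : R) : R :=
  Zqua n x y z1 1 1 z2

/-- Alternative adjacent-boundary doubly-refined generating function `Zbaradj_n(x,y;z1,z2)`. -/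
noncomputable def Zbaradj (n : ℕ) {R : Type*} [CommRing R] (x y z1 z2 : R) : R :=
  Zqua n x y z1 z2 1 1

/-- Triply-refined generating function `Ztri_n(x,y;z1,z2,z3)`. -/
noncomputable def Ztri (n : ℕ) {R : Type*} [CommRing R] (x y z1 z2 z3 : R) : R :=
  Zqua n x y z1 1 z2 z3

/-- Opposite-boundary doubly-refined generating function `Zopp_n(x,y;z1,z2)`. -/
noncomputable def Zopp (n : ℕ) {R : Type*} [CommRing R] (x y z1 z2 : R) : R :=
  Zqua n x y z1 1 z2 1

/-- Singly-refined generating function `Z_n(x,y;z)`. -/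
noncomputable def Zsing (n : ℕ) {R : Type*} [CommRing R] (x y z : R) : R :=
  Zqua n x y z 1 1 1

/-- Unrefined generating function `Z_n(x,y)`.  Note `Zun 0 x y = 1`. -/
noncomputable def Zun (n : ℕ) {R : Type*} [CommRing R] (x y : R) : R :=
  Zqua n x y 1 1 1 1

open Classical in
/-- The alternative quadruply-refined ASM generating function
`Zbarqua_n(x,y;z1,z2,z3,z4)
  = Σ_A x^{ν(A)} y^{μ(A)} z1^{ρT(A)} z2^{n-1-ρR(A)} z3^{ρB(A)} z4^{n-1-ρL(A)}`. -/
noncomputable def Zbarqua (n : ℕ) {R : Type*} [CommRing R] (x y z1 z2 z3 z4 : R) : R :=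
  ∑ e : Fin n → Fin n → Fin 3,
    if IsASM (asmMat e) then
      x ^ nuASM (asmMat e) * y ^ muASM (asmMat e) * z1 ^ rhoT (asmMat e) *
        z2 ^ (n - 1 - rhoR (asmMat e)) * z3 ^ rhoB (asmMat e) *
        z4 ^ (n - 1 - rhoL (asmMat e))
    else 0

open Classical in
/-- `A_n`, the number of alternating sign matrices of size `n`. -/
noncomputable def numASM (n : ℕ) : ℕ :=
  (univ.filter (fun e : Fin n → Fin n → Fin 3 => IsASM (asmMat e))).card

/-- The field of rational functions over `ℚ` in 4 variables. -/
noncomputable abbrev K4 : Type := FractionRing (MvPolynomial (Fin 4) ℚ)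

noncomputable def vz1 : K4 := algebraMap (MvPolynomial (Fin 4) ℚ) K4 (MvPolynomial.X 0)
noncomputable def vz2 : K4 := algebraMap (MvPolynomial (Fin 4) ℚ) K4 (MvPolynomial.X 1)
noncomputable def vz3 : K4 := algebraMap (MvPolynomial (Fin 4) ℚ) K4 (MvPolynomial.X 2)
noncomputable def vz4 : K4 := algebraMap (MvPolynomial (Fin 4) ℚ) K4 (MvPolynomial.X 3)

/-!
Alternating sign matrices of size `n` are the configurations of the six-vertex model on an `n × n`
square with domain wall boundary conditions, and the statistics `ρT`, `ρR`, `ρB`, `ρL` only change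
the weights of the vertices on the four sides.

At a primitive cube root of unity `ω`, the partition function `Z` with spectral parameters `x` of
the rows and `y` of the columns has degree at most `n - 1` in each row parameter, while its values
at the `2 n` points `ω yⱼ` and `ω² yⱼ` reduce to size `n - 1`. Since these points outnumber the
degree, identities between such functions follow by induction on `n`. In this way `Z` is symmetric
in all `2 n` parameters together, and satisfies a quadratic relation of Desnanot–Jacobi type between
the sizes `n`, `n - 1` and `n - 2`, with four distinguished parameters.

Taking all parameters but the two extreme rows and columns equal to `1` gives, up to normalization,
boundary weights `z₁, …, z₄` on the sides, with corner weights such as `z₄ z₁ - z₄ + 1` in place of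
the corner weight `z₁` of `Zbarqua`. The quadratic relation, combined with the symmetry, evaluates
this modified generating function in terms of `Zopp`. Expanding in the four corners, each of which
splits according to whether it contains a `1`, converts it to `Zbarqua` at the cost of the remaining
terms of the identity.
-/

open Matrix (vecCons)

/-! ### Rows and columns of alternating sign matrices -/

section line

variable {n : ℕ}

/-- The condition that an alternating sign matrix imposes on each of its rows and columns. -/
structure IsAlternating (f : Fin n → ℤ) : Prop where
  partialSum_mem : ∀ k, Fin.partialSum f k = 0 ∨ Fin.partialSum f k = 1
  sum_eq_one : ∑ j, f j = 1

/-- The states of the edges met along a row or column `f` of an alternating sign matrix in the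
bijection with the six-vertex model: `edges f k` is the edge just before the entry `k`, and it is
`true` if the entries before `k` sum to `1`. -/
def edges (f : Fin n → ℤ) (k : Fin (n + 1)) : Bool := decide (Fin.partialSum f k = 1)

theorem partialSum_eq_sum_lt (f : Fin n → ℤ) (k : Fin (n + 1)) :
    Fin.partialSum f k = ∑ j with j.castSucc < k, f j := by
  induction k using Fin.induction with
  | zero => simp
  | succ j ih =>
    have : univ.filter (fun i : Fin n => i.castSucc < j.succ) =
        insert j (univ.filter fun i : Fin n => i.castSucc < j.castSucc) := by
      ext i
      simp [Fin.castSucc_lt_succ_iff, le_iff_eq_or_lt]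
    rw [Fin.partialSum_succ, ih, this, sum_insert (by simp), add_comm]

theorem partialSum_last (f : Fin n → ℤ) : Fin.partialSum f (Fin.last n) = ∑ j, f j := by
  simp [partialSum_eq_sum_lt, Fin.castSucc_lt_last]

theorem isAlternating_iff (f : Fin n → ℤ) :
    IsAlternating f ↔ (∀ j, ∑ j' with j' ≤ j, f j' = 0 ∨ ∑ j' with j' ≤ j, f j' = 1) ∧
      ∑ j, f j = 1 := by
  have h (j : Fin n) : ∑ j' with j' ≤ j, f j' = Fin.partialSum f j.succ := by
    simp [partialSum_eq_sum_lt, Fin.castSucc_lt_succ_iff]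
  simp only [h]
  refine ⟨fun ⟨h₁, h₂⟩ => ⟨fun j => h₁ j.succ, h₂⟩, fun ⟨h₁, h₂⟩ => ⟨fun k => ?_, h₂⟩⟩
  cases k using Fin.cases with
  | zero => simp
  | succ j => exact h₁ j

@[simp]
theorem edges_zero (f : Fin n → ℤ) : edges f 0 = false := by
  simp [edges]

theorem IsAlternating.toInt_edges {f : Fin n → ℤ} (h : IsAlternating f) (k : Fin (n + 1)) :
    (edges f k).toInt = Fin.partialSum f k := by
  rcases h.partialSum_mem k with hk | hk <;> simp [edges, hk]

theorem IsAlternating.edges_last {f : Fin n → ℤ} (h : IsAlternating f) :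
    edges f (Fin.last n) = true := by
  simp [edges, partialSum_last, h.sum_eq_one]

theorem IsAlternating.eq_toInt_sub {f : Fin n → ℤ} (h : IsAlternating f) (j : Fin n) :
    f j = (edges f j.succ).toInt - (edges f j.castSucc).toInt := by
  rw [h.toInt_edges, h.toInt_edges, Fin.partialSum_succ, add_sub_cancel_left]

theorem IsAlternating.sum_one_add_sub_edges {f : Fin (n + 1) → ℤ} (h : IsAlternating f) :
    ∑ j : Fin (n + 1), (1 + (edges f j.castSucc).toNat - (edges f j.succ).toNat) = n := by
  have hsum : ∑ j : Fin (n + 1), (edges f j.succ).toNat =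
      ∑ j : Fin (n + 1), (edges f j.castSucc).toNat + 1 := by
    simpa [h.edges_last] using (Fin.sum_univ_succ fun k => (edges f k).toNat).symm.trans
      (Fin.sum_univ_castSucc fun k => (edges f k).toNat)
  have hle (j : Fin (n + 1)) : (edges f j.succ).toNat ≤ 1 + (edges f j.castSucc).toNat :=
    (Bool.toNat_le _).trans (Nat.le_add_right ..)
  rw [sum_tsub_distrib _ fun j _ => hle j, sum_add_distrib, hsum]
  simp only [sum_const, card_univ, Fintype.card_fin, smul_eq_mul, mul_one]
  omega

theorem partialSum_eq_toInt {f : Fin n → ℤ} {w : Fin (n + 1) → Bool} (h₀ : w 0 = false)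
    (h : ∀ j : Fin n, f j = (w j.succ).toInt - (w j.castSucc).toInt) (k : Fin (n + 1)) :
    Fin.partialSum f k = (w k).toInt := by
  induction k using Fin.induction with
  | zero => simp [h₀]
  | succ j ih => rw [Fin.partialSum_succ, ih, h, add_sub_cancel]

theorem isAlternating_of_eq_toInt_sub {f : Fin n → ℤ} {w : Fin (n + 1) → Bool} (h₀ : w 0 = false)
    (h₁ : w (Fin.last n) = true)
    (h : ∀ j : Fin n, f j = (w j.succ).toInt - (w j.castSucc).toInt) : IsAlternating f where
  partialSum_mem k := by
    rw [partialSum_eq_toInt h₀ h]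
    cases w k <;> simp
  sum_eq_one := by rw [← partialSum_last, partialSum_eq_toInt h₀ h, h₁, Bool.toInt_true]

theorem edges_eq_of_eq_toInt_sub {f : Fin n → ℤ} {w : Fin (n + 1) → Bool} (h₀ : w 0 = false)
    (h : ∀ j : Fin n, f j = (w j.succ).toInt - (w j.castSucc).toInt) : edges f = w := by
  funext k
  rw [edges, partialSum_eq_toInt h₀ h]
  cases w k <;> simp

theorem IsAlternating.rev_eq_toInt_sub {f : Fin n → ℤ} (h : IsAlternating f) (j : Fin n) :
    f j.rev = (!edges f j.succ.rev).toInt - (!edges f j.castSucc.rev).toInt := by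
  rw [h.eq_toInt_sub, Fin.rev_succ, Fin.rev_castSucc]
  cases edges f j.rev.succ <;> cases edges f j.rev.castSucc <;> rfl

theorem IsAlternating.rev {f : Fin n → ℤ} (h : IsAlternating f) :
    IsAlternating fun j => f j.rev :=
  isAlternating_of_eq_toInt_sub (w := fun k => !edges f k.rev) (by simp [h.edges_last]) (by simp)
    h.rev_eq_toInt_sub

theorem IsAlternating.edges_rev {f : Fin n → ℤ} (h : IsAlternating f) :
    edges (fun j => f j.rev) = fun k => !edges f k.rev :=
  edges_eq_of_eq_toInt_sub (by simp [h.edges_last]) h.rev_eq_toInt_sub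

theorem IsAlternating.zero_nonneg {f : Fin (n + 1) → ℤ} (h : IsAlternating f) : 0 ≤ f 0 := by
  rw [h.eq_toInt_sub, Fin.castSucc_zero, edges_zero]
  cases edges f (Fin.succ 0) <;> simp

theorem IsAlternating.last_nonneg {f : Fin (n + 1) → ℤ} (h : IsAlternating f) :
    0 ≤ f (Fin.last n) := by
  rw [h.eq_toInt_sub, Fin.succ_last, h.edges_last]
  cases edges f (Fin.last n).castSucc <;> simp

theorem partialSum_cons_succ (x : ℤ) (f : Fin n → ℤ) (k : Fin (n + 1)) :
    Fin.partialSum (vecCons x f) k.succ = x + Fin.partialSum f k := by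
  simp [Fin.partialSum_succ']

theorem isAlternating_cons_zero (f : Fin n → ℤ) :
    IsAlternating (vecCons 0 f) ↔ IsAlternating f := by
  constructor <;> rintro ⟨h₁, h₂⟩
  · exact ⟨fun k => by simpa [partialSum_cons_succ] using h₁ k.succ,
      by simpa [Fin.sum_univ_succ] using h₂⟩
  · exact ⟨Fin.cases (by simp) fun k => by simpa [partialSum_cons_succ] using h₁ k,
      by simpa [Fin.sum_univ_succ] using h₂⟩

theorem edges_cons_zero (f : Fin n → ℤ) (k : Fin (n + 1)) :
    edges (vecCons 0 f) k.succ = edges f k := by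
  simp [edges, partialSum_cons_succ]

theorem partialSum_single (p : Fin n) (k : Fin (n + 1)) :
    Fin.partialSum (Pi.single p (1 : ℤ)) k = if p.castSucc < k then 1 else 0 := by
  simp [partialSum_eq_sum_lt, Pi.single_apply]

theorem isAlternating_single (p : Fin n) : IsAlternating (Pi.single p 1) where
  partialSum_mem k := by
    rw [partialSum_single]
    split_ifs <;> simp
  sum_eq_one := by simp

theorem edges_single (p : Fin n) (k : Fin (n + 1)) :
    edges (Pi.single p 1) k = decide (p.castSucc < k) := by
  simp [edges, partialSum_single]

theorem exists_eq_single_of_sum_eq_one {f : Fin n → ℤ} (hf : ∀ j, 0 ≤ f j) (h : ∑ j, f j = 1) :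
    ∃ p, f = Pi.single p 1 := by
  obtain ⟨p, -, hp⟩ : ∃ p ∈ univ, f p ≠ 0 := exists_ne_zero_of_sum_ne_zero (by simp [h])
  have hpos : 1 ≤ f p := (hf p).lt_of_ne' hp
  rw [← add_sum_erase univ f (mem_univ p)] at h
  have hrest := sum_nonneg fun j (_ : j ∈ univ.erase p) => hf j
  refine ⟨p, funext fun j => ?_⟩
  rcases eq_or_ne j p with rfl | hj
  · simp only [Pi.single_eq_same]
    omega
  · rw [Pi.single_eq_of_ne hj]
    have hzero : ∑ j ∈ univ.erase p, f j = 0 := by omega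
    exact (sum_eq_zero_iff_of_nonneg fun j _ => hf j).1 hzero j (by simp [hj])

theorem isASM_iff_isAlternating (e : Fin n → Fin n → Fin 3) :
    IsASM (asmMat e) ↔
      (∀ i, IsAlternating (asmMat e i)) ∧ ∀ j, IsAlternating fun i => asmMat e i j := by
  have hmem (i j : Fin n) : asmMat e i j = -1 ∨ asmMat e i j = 0 ∨ asmMat e i j = 1 := by
    have := (e i j).isLt
    simp only [asmMat]
    omega
  simp only [isAlternating_iff, IsASM, hmem, implies_true, true_and, forall_and]
  rw [forall_comm (p := fun i j => _ ∨ ∑ i' with i' ≤ i, asmMat e i' j = 1)]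
  tauto

theorem IsASM.isAlternating_row {e : Fin n → Fin n → Fin 3} (h : IsASM (asmMat e)) (i : Fin n) :
    IsAlternating (asmMat e i) :=
  ((isASM_iff_isAlternating e).1 h).1 i

theorem IsASM.isAlternating_col {e : Fin n → Fin n → Fin 3} (h : IsASM (asmMat e)) (j : Fin n) :
    IsAlternating fun i => asmMat e i j :=
  ((isASM_iff_isAlternating e).1 h).2 j

theorem asmMat_injective : Function.Injective (asmMat (n := n)) := by
  intro e e' h
  funext i j
  have := congrFun (congrFun h i) j
  simp only [asmMat] at this
  omega

end line

/-! ### The partition function of the six-vertex model -/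

section icePartition

variable {R S : Type*} [CommRing R] [CommRing S] {n : ℕ}

/-- The weight of a six-vertex configuration whose left, right, top and bottom edges are in the
states `l`, `r`, `t` and `d`; it vanishes unless the ice rule `l + d = r + t` holds. The weights
are normalized so that the vertices carrying an entry `1` have weight `1`, those carrying `-1` have
weight `c`, and the two kinds of vertices carrying `0` have weights `a` and `b`. -/
def iceWeight (a b c : R) : (l r t d : Bool) → R
  | false, true, false, true => 1
  | true, false, true, false => c
  | false, false, true, true | true, true, false, false => a
  | false, false, false, false | true, true, true, true => b
  | _, _, _, _ => 0

theorem iceWeight_transpose (a b c : R) (l r t d : Bool) :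
    iceWeight a b c t d l r = iceWeight a b c l r t d := by
  cases l <;> cases r <;> cases t <;> cases d <;> rfl

theorem iceWeight_flip (a b c : R) (l r t d : Bool) :
    iceWeight b a c l r (!d) (!t) = iceWeight a b c l r t d := by
  cases l <;> cases r <;> cases t <;> cases d <;> rfl

theorem map_iceWeight (f : R →+* S) (a b c : R) (l r t d : Bool) :
    f (iceWeight a b c l r t d) = iceWeight (f a) (f b) (f c) l r t d := by
  cases l <;> cases r <;> cases t <;> cases d <;> simp [iceWeight]

/-- The weight of the vertex of the six-vertex model at the position `(i, j)` of an alternating sign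
matrix `A`, with position-dependent weights `a`, `b` and `c`. -/
def vertexWeight (a b c : Fin n → Fin n → R) (A : Fin n → Fin n → ℤ) (i j : Fin n) : R :=
  iceWeight (a i j) (b i j) (c i j) (edges (A i) j.castSucc) (edges (A i) j.succ)
    (edges (fun i => A i j) i.castSucc) (edges (fun i => A i j) i.succ)

open Classical in
/-- The partition function of the six-vertex model with domain wall boundary conditions and
position-dependent weights, as a sum over alternating sign matrices. -/
noncomputable def icePartition (a b c : Fin n → Fin n → R) : R :=
  ∑ e : Fin n → Fin n → Fin 3,
    if IsASM (asmMat e) then ∏ i, ∏ j, vertexWeight a b c (asmMat e) i j else 0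

theorem map_icePartition (f : R →+* S) (a b c : Fin n → Fin n → R) :
    f (icePartition a b c) =
      icePartition (fun i j => f (a i j)) (fun i j => f (b i j)) fun i j => f (c i j) := by
  simp only [icePartition, vertexWeight, map_sum, apply_ite f, map_zero, map_prod, map_iceWeight]

theorem icePartition_transpose (a b c : Fin n → Fin n → R) :
    icePartition (fun i j => a j i) (fun i j => b j i) (fun i j => c j i) =
      icePartition a b c := by
  classical
  refine Fintype.sum_equiv (Equiv.piComm _) _ _ fun e => ?_
  refine if_congr (by simp only [isASM_iff_isAlternating]; exact and_comm) ?_ rfl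
  rw [prod_comm]
  exact prod_congr rfl fun i _ => prod_congr rfl fun j _ => (iceWeight_transpose ..).symm

theorem IsASM.rev_rows {e : Fin n → Fin n → Fin 3} (h : IsASM (asmMat e)) :
    IsASM (asmMat fun i => e i.rev) :=
  (isASM_iff_isAlternating _).2
    ⟨fun i => h.isAlternating_row i.rev, fun j => (h.isAlternating_col j).rev⟩

theorem icePartition_flip (a b c : Fin n → Fin n → R) :
    icePartition (fun i j => b i.rev j) (fun i j => a i.rev j) (fun i j => c i.rev j) =
      icePartition a b c := by
  refine Fintype.sum_equiv (Fin.revPerm.arrowCongr (Equiv.refl _)) _ _ fun e => ?_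
  have he : Fin.revPerm.arrowCongr (Equiv.refl _) e = fun i => e i.rev := rfl
  rw [he]
  by_cases h : IsASM (asmMat e)
  · rw [if_pos h, if_pos h.rev_rows, ← Equiv.prod_comp Fin.revPerm]
    refine prod_congr rfl fun i _ => prod_congr rfl fun j _ => ?_
    have hcol : edges (fun i => asmMat (fun i => e i.rev) i j) =
        fun k => !edges (fun i => asmMat e i j) k.rev := (h.isAlternating_col j).edges_rev
    have hrow : asmMat (fun i => e i.rev) i = asmMat e i.rev := rfl
    simp only [vertexWeight, hcol, hrow, Fin.rev_succ, Fin.rev_castSucc, Fin.rev_rev,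
      iceWeight_flip, Fin.revPerm_apply]
  · rw [if_neg h, if_neg fun h' => h (by simpa using h'.rev_rows)]

theorem IsASM.vertexWeight_one {e : Fin n → Fin n → Fin 3} (h : IsASM (asmMat e)) (i j : Fin n) :
    vertexWeight (fun _ _ => (1 : R)) (fun _ _ => 1) (fun _ _ => 1) (asmMat e) i j = 1 := by
  have hice := ((h.isAlternating_row i).eq_toInt_sub j).symm.trans
    ((h.isAlternating_col j).eq_toInt_sub i)
  revert hice
  rw [vertexWeight]
  cases edges (asmMat e i) j.castSucc <;> cases edges (asmMat e i) j.succ <;>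
    cases edges (fun i => asmMat e i j) i.castSucc <;>
    cases edges (fun i => asmMat e i j) i.succ <;> simp [iceWeight]

theorem icePartition_one :
    icePartition (n := n) (fun _ _ => (1 : R)) (fun _ _ => 1) (fun _ _ => 1) = numASM n := by
  classical
  rw [numASM, ← sum_boole]
  refine sum_congr rfl fun e _ => ?_
  split_ifs with h
  · exact prod_eq_one fun i _ => prod_eq_one fun j _ => h.vertexWeight_one i j
  · rfl

theorem IsASM.vertexWeight_zero_zero {e : Fin (n + 1) → Fin (n + 1) → Fin 3}
    (h : IsASM (asmMat e)) (a b c : Fin (n + 1) → Fin (n + 1) → R) :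
    vertexWeight a b c (asmMat e) 0 0 = if asmMat e 0 0 = 1 then 1 else b 0 0 := by
  have hr := (h.isAlternating_row 0).eq_toInt_sub 0
  have hd := (h.isAlternating_col 0).eq_toInt_sub 0
  rw [vertexWeight]
  simp only [Fin.castSucc_zero, edges_zero] at hr hd ⊢
  revert hr hd
  cases edges (asmMat e 0) (Fin.succ 0) <;> cases edges (fun i => asmMat e i 0) (Fin.succ 0) <;>
    simp +contextual [iceWeight]

/-- The matrix obtained from `e` by adding a first row and a first column whose only nonzero entry
is a `1` in their common corner. -/
def border (e : Fin n → Fin n → Fin 3) : Fin (n + 1) → Fin (n + 1) → Fin 3 :=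
  vecCons (vecCons 2 fun _ => 1) fun i => vecCons 1 (e i)

theorem asmMat_border_zero (e : Fin n → Fin n → Fin 3) :
    asmMat (border e) 0 = Pi.single 0 1 := by
  ext j
  cases j using Fin.cases <;> simp [asmMat, border]

theorem asmMat_border_succ (e : Fin n → Fin n → Fin 3) (i : Fin n) :
    asmMat (border e) i.succ = vecCons 0 (asmMat e i) := by
  ext j
  cases j using Fin.cases <;> simp [asmMat, border]

theorem asmMat_border_col_zero (e : Fin n → Fin n → Fin 3) :
    (fun i => asmMat (border e) i 0) = Pi.single 0 1 := by
  ext i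
  cases i using Fin.cases <;> simp [asmMat, border]

theorem asmMat_border_col_succ (e : Fin n → Fin n → Fin 3) (j : Fin n) :
    (fun i => asmMat (border e) i j.succ) = vecCons 0 fun i => asmMat e i j := by
  ext i
  cases i using Fin.cases <;> simp [asmMat, border]

theorem isASM_border (e : Fin n → Fin n → Fin 3) :
    IsASM (asmMat (border e)) ↔ IsASM (asmMat e) := by
  simp only [isASM_iff_isAlternating, Fin.forall_fin_succ, asmMat_border_zero, asmMat_border_succ,
    asmMat_border_col_zero, asmMat_border_col_succ, isAlternating_cons_zero, isAlternating_single,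
    true_and]

theorem border_injective : Function.Injective (border (n := n)) := by
  intro e e' h
  funext i j
  simpa [border] using congrFun (congrFun h i.succ) j.succ

theorem IsASM.exists_border_eq {e : Fin (n + 1) → Fin (n + 1) → Fin 3} (h : IsASM (asmMat e))
    (h₀ : asmMat e 0 0 = 1) : ∃ e', border e' = e := by
  obtain ⟨p, hp⟩ := exists_eq_single_of_sum_eq_one
    (fun j => (h.isAlternating_col j).zero_nonneg) (h.isAlternating_row 0).sum_eq_one
  obtain ⟨q, hq⟩ := exists_eq_single_of_sum_eq_one
    (fun i => (h.isAlternating_row i).zero_nonneg) (h.isAlternating_col 0).sum_eq_one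
  obtain rfl : 0 = p := by
    by_contra hne
    simp [hp, hne] at h₀
  obtain rfl : 0 = q := by
    by_contra hne
    simp [congrFun hq 0, hne] at h₀
  refine ⟨fun i j => e i.succ j.succ, asmMat_injective ?_⟩
  funext i j
  cases i using Fin.cases with
  | zero => rw [asmMat_border_zero, hp]
  | succ i =>
    rw [asmMat_border_succ]
    cases j using Fin.cases with
    | zero => simpa using (congrFun hq i.succ).symm
    | succ j => rfl

theorem prod_vertexWeight_border (a b c : Fin (n + 1) → Fin (n + 1) → R)
    (e : Fin n → Fin n → Fin 3) :
    ∏ i, ∏ j, vertexWeight a b c (asmMat (border e)) i j =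
      (∏ j : Fin n, a 0 j.succ) * (∏ i : Fin n, a i.succ 0) *
        ∏ i, ∏ j, vertexWeight (fun i j : Fin n => a i.succ j.succ) (fun i j => b i.succ j.succ)
          (fun i j => c i.succ j.succ) (asmMat e) i j := by
  have hcorner : vertexWeight a b c (asmMat (border e)) 0 0 = 1 := by
    simp [vertexWeight, asmMat_border_zero, asmMat_border_col_zero, edges_single, iceWeight]
  have hrow (j : Fin n) : vertexWeight a b c (asmMat (border e)) 0 j.succ = a 0 j.succ := by
    rw [vertexWeight, asmMat_border_zero, asmMat_border_col_succ, edges_cons_zero]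
    simp [edges_single, iceWeight]
  have hcol (i : Fin n) : vertexWeight a b c (asmMat (border e)) i.succ 0 = a i.succ 0 := by
    rw [vertexWeight, asmMat_border_succ, asmMat_border_col_zero, edges_cons_zero]
    simp [edges_single, iceWeight]
  have hrest (i j : Fin n) : vertexWeight a b c (asmMat (border e)) i.succ j.succ =
      vertexWeight (fun i j : Fin n => a i.succ j.succ) (fun i j => b i.succ j.succ)
        (fun i j => c i.succ j.succ) (asmMat e) i j := by
    simp only [vertexWeight, asmMat_border_succ, asmMat_border_col_succ, ← Fin.succ_castSucc,
      edges_cons_zero]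
  simp only [Fin.prod_univ_succ, hcorner, hrow, hcol, hrest, prod_mul_distrib, one_mul]
  ring

theorem icePartition_eq_mul_of_corner_eq_zero (a b c : Fin (n + 1) → Fin (n + 1) → R)
    (h₀ : b 0 0 = 0) :
    icePartition a b c = (∏ j : Fin n, a 0 j.succ) * (∏ i : Fin n, a i.succ 0) *
      icePartition (fun i j : Fin n => a i.succ j.succ) (fun i j => b i.succ j.succ)
        fun i j => c i.succ j.succ := by
  classical
  rw [icePartition, icePartition, mul_sum]
  refine (sum_of_injOn border border_injective.injOn (fun _ _ => mem_coe.2 (mem_univ _)) ?_ ?_).symm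
  · intro e _ he
    split_ifs with h
    · refine prod_eq_zero (mem_univ 0) (prod_eq_zero (mem_univ 0) ?_)
      have hne : asmMat e 0 0 ≠ 1 := fun h₁ => he ((h.exists_border_eq h₁).imp fun _ h => by simpa)
      rw [h.vertexWeight_zero_zero, if_neg hne, h₀]
    · rfl
  · intro e _
    rw [mul_ite, mul_zero, prod_vertexWeight_border]
    exact if_congr (isASM_border e).symm rfl rfl

end icePartition

/-! ### Transfer matrices -/

section transfer

open scoped Kronecker

variable {R : Type*} [CommRing R] {n : ℕ}

/-- The states of the vertical and of the horizontal edges of the six-vertex configuration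
attached to the matrix encoded by `e`. -/
def asmEdges (e : Fin n → Fin n → Fin 3) :
    (Fin (n + 1) → Fin n → Bool) × (Fin n → Fin (n + 1) → Bool) :=
  (fun k j => edges (fun i => asmMat e i j) k, fun i k => edges (asmMat e i) k)

/-- The domain wall boundary conditions: the edges are `false` on the top and on the left, `true` on
the bottom and on the right. -/
def IsDomainWall (p : (Fin (n + 1) → Fin n → Bool) × (Fin n → Fin (n + 1) → Bool)) : Prop :=
  (p.1 0 = (fun _ => false) ∧ p.1 (Fin.last n) = fun _ => true) ∧
    ∀ i, p.2 i 0 = false ∧ p.2 i (Fin.last n) = true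

theorem IsASM.isDomainWall_asmEdges {e : Fin n → Fin n → Fin 3} (h : IsASM (asmMat e)) :
    IsDomainWall (asmEdges e) :=
  ⟨⟨funext fun j => edges_zero fun i => asmMat e i j,
    funext fun j => (h.isAlternating_col j).edges_last⟩,
    fun i => ⟨edges_zero (asmMat e i), (h.isAlternating_row i).edges_last⟩⟩

theorem injOn_asmEdges :
    Set.InjOn asmEdges {e : Fin n → Fin n → Fin 3 | IsASM (asmMat e)} := by
  intro e he e' he' h
  have hrow (i : Fin n) : edges (asmMat e i) = edges (asmMat e' i) :=
    congrFun (congrArg Prod.snd h) i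
  refine asmMat_injective (funext fun i => funext fun j => ?_)
  rw [(IsASM.isAlternating_row he i).eq_toInt_sub, (IsASM.isAlternating_row he' i).eq_toInt_sub,
    hrow]

theorem exists_isASM_asmEdges_eq {v : Fin (n + 1) → Fin n → Bool} {h : Fin n → Fin (n + 1) → Bool}
    (hvh : IsDomainWall (v, h))
    (hice : ∀ i j, (h i j.succ).toInt - (h i j.castSucc).toInt =
      (v i.succ j).toInt - (v i.castSucc j).toInt) :
    ∃ e, IsASM (asmMat e) ∧ asmEdges e = (v, h) := by
  obtain ⟨⟨hv₀, hv₁⟩, hh⟩ := hvh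
  let e : Fin n → Fin n → Fin 3 := fun i j =>
    ⟨((h i j.succ).toInt - (h i j.castSucc).toInt + 1).toNat, by
      cases h i j.succ <;> cases h i j.castSucc <;> simp⟩
  have hrow (i j : Fin n) : asmMat e i j = (h i j.succ).toInt - (h i j.castSucc).toInt := by
    simp only [asmMat, e]
    cases h i j.succ <;> cases h i j.castSucc <;> simp
  have hcol (j i : Fin n) : asmMat e i j = (v i.succ j).toInt - (v i.castSucc j).toInt := by
    rw [hrow, hice]
  refine ⟨e, (isASM_iff_isAlternating e).2 ⟨fun i => ?_, fun j => ?_⟩, Prod.ext ?_ ?_⟩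
  · exact isAlternating_of_eq_toInt_sub (hh i).1 (hh i).2 (hrow i)
  · exact isAlternating_of_eq_toInt_sub (w := fun k => v k j) (congrFun hv₀ j) (congrFun hv₁ j)
      (hcol j)
  · funext k j
    exact congrFun (edges_eq_of_eq_toInt_sub (w := fun k => v k j) (congrFun hv₀ j) (hcol j)) k
  · exact funext fun i => edges_eq_of_eq_toInt_sub (hh i).1 (hrow i)

theorem toInt_sub_eq_of_iceWeight_ne_zero {a b c : R} {l r t d : Bool}
    (h : iceWeight a b c l r t d ≠ 0) : r.toInt - l.toInt = d.toInt - t.toInt := by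
  revert h
  cases l <;> cases r <;> cases t <;> cases d <;> simp [iceWeight]

open Classical in
theorem icePartition_eq_sum_isDomainWall (a b c : Fin n → Fin n → R) :
    icePartition a b c = ∑ p : (Fin (n + 1) → Fin n → Bool) × (Fin n → Fin (n + 1) → Bool),
      if IsDomainWall p then
        ∏ i, ∏ j, iceWeight (a i j) (b i j) (c i j) (p.2 i j.castSucc) (p.2 i j.succ)
          (p.1 i.castSucc j) (p.1 i.succ j)
      else 0 := by
  simp only [icePartition, ← sum_filter]
  refine sum_of_injOn asmEdges ?_ ?_ ?_ fun _ _ => rfl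
  · simpa only [coe_filter_univ] using injOn_asmEdges
  · intro e he
    simp only [coe_filter_univ, Set.mem_ofPred_eq] at he ⊢
    exact he.isDomainWall_asmEdges
  · rintro ⟨v, h⟩ hp hne
    by_contra hprod
    refine hne ?_
    simp only [coe_filter_univ]
    exact exists_isASM_asmEdges_eq ((mem_filter_univ _).1 hp) fun i j =>
      toInt_sub_eq_of_iceWeight_ne_zero fun h₀ =>
        hprod (prod_eq_zero (mem_univ i) (prod_eq_zero (mem_univ j) h₀))

/-- The row transfer matrix: the partition function of a single row as a function of the states of
the vertical edges above and below it. -/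
def rowTransfer (a b c : Fin n → R) : Matrix (Fin n → Bool) (Fin n → Bool) R :=
  Matrix.of fun s s' =>
    (List.ofFn fun j => (Matrix.of fun l r => iceWeight (a j) (b j) (c j) l r (s j) (s' j) :
      Matrix Bool Bool R)).prod false true

theorem list_prod_ofFn_apply {S : Type*} [Fintype S] [DecidableEq S] (M : Fin n → Matrix S S R)
    (s t : S) :
    (List.ofFn M).prod s t = ∑ v : Fin (n + 1) → S,
      if v 0 = s ∧ v (Fin.last n) = t then ∏ i, M i (v i.castSucc) (v i.succ) else 0 := by
  induction n generalizing s with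
  | zero =>
    rw [← Equiv.sum_comp (Equiv.funUnique (Fin 1) S).symm]
    simp [Matrix.one_apply, ite_and]
  | succ n ih =>
    rw [List.ofFn_succ, List.prod_cons, Matrix.mul_apply,
      ← Equiv.sum_comp (Fin.consEquiv fun _ => S), Fintype.sum_prod_type]
    simp only [ih, Fin.consEquiv_apply, Fin.cons_zero, Fin.cons_succ, Fin.prod_univ_succ,
      Fin.castSucc_zero, ← Fin.succ_last, ← Fin.succ_castSucc, ite_and, mul_sum, mul_ite, mul_zero]
    rw [sum_comm, sum_comm (s := univ (α := S))]
    simp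

theorem icePartition_eq_list_prod_rowTransfer (a b c : Fin n → Fin n → R) :
    icePartition a b c =
      (List.ofFn fun i => rowTransfer (a i) (b i) (c i)).prod (fun _ => false) fun _ => true := by
  classical
  rw [icePartition_eq_sum_isDomainWall, list_prod_ofFn_apply, Fintype.sum_prod_type]
  refine sum_congr rfl fun v _ => ?_
  simp only [IsDomainWall, ite_and (v 0 = _ ∧ _), rowTransfer, Matrix.of_apply,
    list_prod_ofFn_apply, prod_univ_sum, Fintype.piFinset_univ, prod_ite_zero, mem_univ,
    true_implies]
  split_ifs <;> simp

theorem sum_list_prod_kronecker {S T : Type*} [Fintype S] [DecidableEq S] [Fintype T]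
    (U V : Fin n → T → Matrix S S R) :
    ∑ s : Fin n → T, (List.ofFn fun j => U j (s j)).prod ⊗ₖ (List.ofFn fun j => V j (s j)).prod =
      (List.ofFn fun j => ∑ σ : T, U j σ ⊗ₖ V j σ).prod := by
  induction n with
  | zero => simp
  | succ n ih =>
    rw [← Equiv.sum_comp (Fin.consEquiv fun _ => T), Fintype.sum_prod_type]
    simp only [List.ofFn_succ, List.prod_cons, Fin.consEquiv_apply, Fin.cons_zero, Fin.cons_succ,
      Matrix.mul_kronecker_mul, ← mul_sum, ih, sum_mul]

theorem mul_list_prod_ofFn {M : Type*} [Monoid M] {p : M} {u v : Fin n → M}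
    (h : ∀ j, p * u j = v j * p) : p * (List.ofFn u).prod = (List.ofFn v).prod * p := by
  rw [List.ofFn_eq_map, List.ofFn_eq_map]
  exact List.prod_hom_rel (r := SemiconjBy p) _ (SemiconjBy.one_right p)
    fun j _ _ hab => SemiconjBy.mul_right (h j) hab

end transfer

/-! ### The Yang–Baxter equation at a cube root of unity -/

section cubic

open scoped Kronecker

/-- The `a`-weight at a cube root of unity `ω` of a vertex with spectral parameters `x` (of its row)
and `y` (of its column). -/
def cubicA {R : Type*} [CommRing R] (ω x y : R) : R := y - ω ^ 2 * x

/-- The `b`-weight at a cube root of unity `ω` of a vertex with spectral parameters `x` (of its row)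
and `y` (of its column). -/
def cubicB {R : Type*} [CommRing R] (ω x y : R) : R := x - ω ^ 2 * y

/-- The weight at a cube root of unity `ω` of a vertex carrying an entry `-1`, with spectral
parameters `x` (of its row) and `y` (of its column). -/
def cubicC {R : Type*} [CommRing R] (ω x y : R) : R := -(3 * ω ^ 2 * (x * y))

variable {R : Type*} [CommRing R] {ω : R} {n : ℕ}

/-- The inhomogeneous six-vertex partition function with domain wall boundary conditions at a cube
root of unity `ω`, with spectral parameters `x` of the rows and `y` of the columns. -/
noncomputable def cubicPartition (ω : R) (x y : Fin n → R) : R :=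
  icePartition (fun i j => cubicA ω (x i) (y j)) (fun i j => cubicB ω (x i) (y j))
    fun i j => cubicC ω (x i) (y j)

/-- The weights of a vertex with top edge `t` and bottom edge `d`, as a matrix acting on the states
of the horizontal edges. -/
def vertexMatrix (ω x y : R) (t d : Bool) : Matrix Bool Bool R :=
  Matrix.of fun l r => iceWeight (cubicA ω x y) (cubicB ω x y) (cubicC ω x y) l r t d

/-- The `R`-matrix that exchanges the spectral parameters `x` and `x'` of two adjacent rows. -/
def rMatrix (ω x x' : R) : Matrix (Bool × Bool) (Bool × Bool) R :=
  Matrix.of fun p q => match p, q with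
    | (false, false), (false, false) | (true, true), (true, true) => x - ω ^ 2 * x'
    | (false, true), (false, true) => x * (2 + ω)
    | (true, false), (true, false) => x' * (2 + ω)
    | (false, true), (true, false) | (true, false), (false, true) => ω * (x' - x)
    | _, _ => 0

theorem rMatrix_mul_vertexMatrix (hω : ω ^ 2 + ω + 1 = 0) (x x' y : R) (t d : Bool) :
    rMatrix ω x x' * (∑ σ, vertexMatrix ω x y t σ ⊗ₖ vertexMatrix ω x' y σ d) =
      (∑ σ, vertexMatrix ω x' y t σ ⊗ₖ vertexMatrix ω x y σ d) * rMatrix ω x x' := by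
  ext ⟨i, k⟩ ⟨j, l⟩
  simp only [Matrix.mul_apply, Fintype.sum_prod_type, Fintype.sum_bool, Matrix.add_apply,
    Matrix.kronecker_apply, vertexMatrix, rMatrix, Matrix.of_apply]
  cases t <;> cases d <;> cases i <;> cases k <;> cases j <;> cases l <;>
    simp only [iceWeight, cubicA, cubicB, cubicC] <;> grind

theorem rMatrix_mul_apply_false (ω x x' : R) (M : Matrix (Bool × Bool) (Bool × Bool) R)
    (q : Bool × Bool) :
    (rMatrix ω x x' * M) (false, false) q = (x - ω ^ 2 * x') * M (false, false) q := by
  simp [Matrix.mul_apply, Fintype.sum_prod_type, rMatrix]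

theorem mul_rMatrix_apply_true (ω x x' : R) (M : Matrix (Bool × Bool) (Bool × Bool) R)
    (p : Bool × Bool) :
    (M * rMatrix ω x x') p (true, true) = (x - ω ^ 2 * x') * M p (true, true) := by
  simp [Matrix.mul_apply, Fintype.sum_prod_type, rMatrix, mul_comm]

/-- The row transfer matrix with spectral parameters `x` of the row and `y` of the columns. -/
def cubicTransfer (ω : R) (y : Fin n → R) (x : R) : Matrix (Fin n → Bool) (Fin n → Bool) R :=
  rowTransfer (fun j => cubicA ω x (y j)) (fun j => cubicB ω x (y j)) fun j => cubicC ω x (y j)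

theorem cubicTransfer_mul_apply (ω : R) (y : Fin n → R) (x x' : R) (s s' : Fin n → Bool) :
    (cubicTransfer ω y x * cubicTransfer ω y x') s s' =
      (List.ofFn fun j => ∑ σ, vertexMatrix ω x (y j) (s j) σ ⊗ₖ
        vertexMatrix ω x' (y j) σ (s' j)).prod (false, false) (true, true) := by
  rw [← sum_list_prod_kronecker (fun j σ => vertexMatrix ω x (y j) (s j) σ)
    (fun j σ => vertexMatrix ω x' (y j) σ (s' j)), Matrix.sum_apply, Matrix.mul_apply]
  rfl

theorem mul_cubicTransfer_mul_apply (hω : ω ^ 2 + ω + 1 = 0) (y : Fin n → R) (x x' : R)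
    (s s' : Fin n → Bool) :
    (x - ω ^ 2 * x') * (cubicTransfer ω y x * cubicTransfer ω y x') s s' =
      (x - ω ^ 2 * x') * (cubicTransfer ω y x' * cubicTransfer ω y x) s s' := by
  rw [cubicTransfer_mul_apply, cubicTransfer_mul_apply, ← rMatrix_mul_apply_false,
    ← mul_rMatrix_apply_true, mul_list_prod_ofFn fun j =>
      rMatrix_mul_vertexMatrix hω x x' (y j) (s j) (s' j)]

theorem map_cubicPartition {S : Type*} [CommRing S] (f : R →+* S) (ω : R) (x y : Fin n → R) :
    f (cubicPartition ω x y) = cubicPartition (f ω) (f ∘ x) (f ∘ y) := by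
  simp [cubicPartition, map_icePartition, cubicA, cubicB, cubicC, map_ofNat]

theorem map_sq_add_self_add_one {S : Type*} [CommRing S] (f : R →+* S)
    (hω : ω ^ 2 + ω + 1 = 0) : f ω ^ 2 + f ω + 1 = 0 := by
  rw [← map_pow, ← map_one f, ← map_add, ← map_add, hω, map_zero]

theorem map_cubicTransfer {S : Type*} [CommRing S] (f : R →+* S) (ω : R) (y : Fin n → R) (x : R) :
    (cubicTransfer ω y x).map f = cubicTransfer (f ω) (f ∘ y) (f x) := by
  ext s s'
  simp [cubicTransfer, rowTransfer, list_prod_ofFn_apply, apply_ite f, map_iceWeight, cubicA,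
    cubicB, cubicC, map_ofNat]

open Polynomial in
theorem commute_cubicTransfer (hω : ω ^ 2 + ω + 1 = 0) (y : Fin n → R) (x x' : R) :
    Commute (cubicTransfer ω y x) (cubicTransfer ω y x') := by
  -- Over `R[X]` the factor `X - ω ^ 2 * x'` of `mul_cubicTransfer_mul_apply` is monic.
  have key : cubicTransfer (C ω) (C ∘ y) X * cubicTransfer (C ω) (C ∘ y) (C x') =
      cubicTransfer (C ω) (C ∘ y) (C x') * cubicTransfer (C ω) (C ∘ y) (X : R[X]) := by
    ext1 s s'
    have hmonic : (X - C ω ^ 2 * C x').Monic := by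
      rw [← C_pow, ← C_mul]
      exact monic_X_sub_C _
    exact hmonic.isRegular.left
      (mul_cubicTransfer_mul_apply (map_sq_add_self_add_one C hω) _ X (C x') s s')
  have heval := congrArg (fun M => M.map (evalRingHom x)) key
  simp only [Matrix.map_mul, map_cubicTransfer] at heval
  simpa only [Commute, SemiconjBy, coe_evalRingHom, eval_X, eval_C, Function.comp_def] using heval

theorem cubicPartition_comp_perm_left (hω : ω ^ 2 + ω + 1 = 0) (σ : Equiv.Perm (Fin n))
    (x y : Fin n → R) : cubicPartition ω (x ∘ σ) y = cubicPartition ω x y := by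
  simp only [cubicPartition, icePartition_eq_list_prod_rowTransfer]
  refine congrArg (· (fun _ => false) fun _ => true) (List.Perm.prod_eq'
    (Equiv.Perm.ofFn_comp_perm σ fun i => cubicTransfer ω y (x i)) ?_)
  exact List.pairwise_ofFn.2 fun i j _ => commute_cubicTransfer hω y _ _

theorem cubicPartition_comm (hω : ω ^ 2 + ω + 1 = 0) (x y : Fin n → R) :
    cubicPartition ω x y = cubicPartition ω y x := by
  rw [← cubicPartition_comp_perm_left hω Fin.revPerm y x, cubicPartition, ← icePartition_transpose,
    ← icePartition_flip]
  simp only [cubicPartition, cubicA, cubicB, cubicC, Function.comp, Fin.revPerm_apply, mul_comm]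

theorem cubicPartition_comp_perm_right (hω : ω ^ 2 + ω + 1 = 0) (σ : Equiv.Perm (Fin n))
    (x y : Fin n → R) : cubicPartition ω x (y ∘ σ) = cubicPartition ω x y := by
  rw [cubicPartition_comm hω, cubicPartition_comp_perm_left hω, cubicPartition_comm hω]

end cubic

/-! ### Symmetry of the partition function in all the spectral parameters -/

section entries

variable {α : Type*} {n : ℕ}

/-- The multiset of the entries of a tuple. -/
def entries (x : Fin n → α) : Multiset α := univ.val.map x

theorem entries_comp_perm (x : Fin n → α) (σ : Equiv.Perm (Fin n)) :
    entries (x ∘ σ) = entries x := by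
  rw [entries, ← Multiset.map_map, Multiset.map_univ_val_equiv, entries]

theorem entries_cons (a : α) (x : Fin n → α) : entries (vecCons a x) = a ::ₘ entries x := by
  simp [entries, vecCons, List.ofFn_succ]

theorem entries_cons_removeNth (x : Fin (n + 1) → α) (p : Fin (n + 1)) :
    entries (vecCons (x p) (p.removeNth x)) = entries x := by
  rw [vecCons, Fin.cons_removeNth_eq_comp_cycleRange_symm, entries_comp_perm]

theorem exists_perm_of_map_eq {ι : Type*} [Fintype ι] {f g : ι → α}
    (h : (univ : Finset ι).val.map f = univ.val.map g) : ∃ σ : Equiv.Perm ι, f = g ∘ σ := by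
  classical
  have hcard (c : α) : Nonempty ({i // f i = c} ≃ {i // g i = c}) := by
    have hcount := congrArg (Multiset.count c) h
    simp only [Multiset.count_map, eq_comm (a := c)] at hcount
    rwa [← Fintype.card_eq, Fintype.card_subtype, Fintype.card_subtype]
  exact ⟨Equiv.ofFiberEquiv fun c => (hcard c).some,
    funext fun i => (Equiv.ofFiberEquiv_map _ i).symm⟩

theorem comp_vecCons {β : Type*} (f : α → β) (a : α) (x : Fin n → α) :
    f ∘ vecCons a x = vecCons (f a) (f ∘ x) :=
  Fin.comp_cons f a x

end entries

section degree

open Polynomial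

variable {R : Type*} [CommRing R] {n : ℕ}

theorem natDegree_iceWeight_le {a b c : R[X]} {δ : ℕ} (ha : a.natDegree ≤ δ)
    (hb : b.natDegree ≤ δ) (hc : c.natDegree ≤ 2 * δ) (l r t d : Bool) :
    (iceWeight a b c l r t d).natDegree ≤ (1 + l.toNat - r.toNat) * δ := by
  cases l <;> cases r <;> cases t <;> cases d <;> simp [iceWeight, ha, hb, hc]

theorem natDegree_icePartition_le {a b c : Fin (n + 1) → Fin (n + 1) → R[X]}
    {δ : Fin (n + 1) → ℕ} (ha : ∀ i j, (a i j).natDegree ≤ δ i)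
    (hb : ∀ i j, (b i j).natDegree ≤ δ i) (hc : ∀ i j, (c i j).natDegree ≤ 2 * δ i) :
    (icePartition a b c).natDegree ≤ n * ∑ i, δ i := by
  refine natDegree_sum_le_of_forall_le _ _ fun e _ => ?_
  split_ifs with h
  · have hrow (i : Fin (n + 1)) :
        (∏ j, vertexWeight a b c (asmMat e) i j).natDegree ≤ n * δ i := by
      have hsum := (h.isAlternating_row i).sum_one_add_sub_edges
      refine (natDegree_prod_le _ _).trans ((sum_le_sum fun j _ =>
        natDegree_iceWeight_le (ha i j) (hb i j) (hc i j) ..).trans_eq ?_)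
      rw [← sum_mul, hsum]
    rw [mul_sum]
    exact (natDegree_prod_le _ _).trans (sum_le_sum fun i _ => hrow i)
  · simp

theorem natDegree_cubicA_le (ω : R) (x : R[X]) {y : R[X]} (hy : y.natDegree = 0) :
    (cubicA (C ω) x y).natDegree ≤ x.natDegree := by
  obtain ⟨y, rfl⟩ := natDegree_eq_zero.1 hy
  rw [cubicA, ← C_pow, natDegree_sub, natDegree_sub_C]
  exact natDegree_C_mul_le _ _

theorem natDegree_cubicB_le (ω : R) (x : R[X]) {y : R[X]} (hy : y.natDegree = 0) :
    (cubicB (C ω) x y).natDegree ≤ x.natDegree := by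
  obtain ⟨y, rfl⟩ := natDegree_eq_zero.1 hy
  rw [cubicB, ← C_pow, ← C_mul, natDegree_sub_C]

theorem natDegree_cubicC_le (ω : R) (x : R[X]) {y : R[X]} (hy : y.natDegree = 0) :
    (cubicC (C ω) x y).natDegree ≤ x.natDegree := by
  obtain ⟨y, rfl⟩ := natDegree_eq_zero.1 hy
  have h : cubicC (C ω) x (C y) = C (-3 * ω ^ 2 * y) * x := by
    simp only [cubicC, map_mul, map_neg, map_pow, map_ofNat]
    ring
  exact h ▸ natDegree_C_mul_le _ _

theorem natDegree_cubicPartition_le (ω : R) (x y : Fin n → R[X])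
    (hy : ∀ j, (y j).natDegree = 0) :
    (cubicPartition (C ω) x y).natDegree ≤ (n - 1) * ∑ i, (x i).natDegree := by
  cases n with
  | zero => simp [cubicPartition, icePartition]
  | succ n =>
    exact natDegree_icePartition_le (fun i j => natDegree_cubicA_le ω (x i) (hy j))
      (fun i j => natDegree_cubicB_le ω (x i) (hy j))
      fun i j => (natDegree_cubicC_le ω (x i) (hy j)).trans (by omega)

theorem eval_cubicPartition (ω t : R) (x y : Fin n → R[X]) :
    (cubicPartition (C ω) x y).eval t = cubicPartition ω (eval t ∘ x) (eval t ∘ y) := by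
  simpa using map_cubicPartition (evalRingHom t) (C ω) x y

theorem eval_comp_C_comp (t : R) (x : Fin n → R) : eval t ∘ C ∘ x = x := by
  ext
  simp

end degree

section symmetric

variable {R : Type*} [CommRing R] {ω : R} {n : ℕ}

theorem cubicPartition_congr_left (hω : ω ^ 2 + ω + 1 = 0) {x x' : Fin n → R} (y : Fin n → R)
    (h : entries x = entries x') : cubicPartition ω x y = cubicPartition ω x' y := by
  obtain ⟨σ, rfl⟩ := exists_perm_of_map_eq h
  exact cubicPartition_comp_perm_left hω σ x' y

theorem cubicPartition_congr_right (hω : ω ^ 2 + ω + 1 = 0) {y y' : Fin n → R} (x : Fin n → R)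
    (h : entries y = entries y') : cubicPartition ω x y = cubicPartition ω x y' := by
  rw [cubicPartition_comm hω, cubicPartition_congr_left hω x h, cubicPartition_comm hω]

theorem cubicPartition_fin_one (x y : Fin 1 → R) : cubicPartition ω x y = 1 := by
  simp [cubicPartition, icePartition_eq_list_prod_rowTransfer, rowTransfer, iceWeight]

/-- The two primitive cube roots of unity `ω` and `ω ^ 2`. -/
def cubeRoot (ω : R) : Bool → R
  | true => ω
  | false => ω ^ 2

/-- The factor by which the partition function with first spectral parameters `u * b` and `b`, where
`u` is a primitive cube root of unity, exceeds that with spectral parameters `x` and `y`. -/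
def cornerFactor (ω u b : R) (x y : Fin n → R) : R :=
  (-ω ^ 2) ^ n * ((∏ i, (x i - u ^ 2 * b)) * ∏ i, (y i - u ^ 2 * b))

theorem cornerFactor_cons (u b p q : R) (x y : Fin n → R) :
    cornerFactor ω u b (vecCons p x) (vecCons q y) =
      -ω ^ 2 * ((p - u ^ 2 * b) * (q - u ^ 2 * b)) * cornerFactor ω u b x y := by
  simp only [cornerFactor, Fin.prod_univ_succ, Matrix.cons_val_zero, Matrix.cons_val_succ, pow_succ]
  ring

theorem cubicPartition_cons_sq_mul (hω : ω ^ 2 + ω + 1 = 0) (b : R) (x y : Fin n → R) :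
    cubicPartition ω (vecCons (ω ^ 2 * b) x) (vecCons b y) =
      cornerFactor ω (ω ^ 2) b x y * cubicPartition ω x y := by
  have hrow (q : R) : cubicA ω (ω ^ 2 * b) q = q - (ω ^ 2) ^ 2 * b := by
    rw [cubicA]
    ring
  have hcol (p : R) : cubicA ω p b = -ω ^ 2 * (p - (ω ^ 2) ^ 2 * b) := by
    rw [cubicA]
    linear_combination (1 - ω) * (1 + ω ^ 3) * b * hω
  rw [cubicPartition, icePartition_eq_mul_of_corner_eq_zero _ _ _ (by simp [cubicB])]
  simp only [Matrix.cons_val_zero, Matrix.cons_val_succ, hrow, hcol, prod_mul_distrib, prod_const,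
    card_univ, Fintype.card_fin, cornerFactor, cubicPartition]
  ring

theorem cubicPartition_cons_mul (hω : ω ^ 2 + ω + 1 = 0) (s : Bool) (b : R) (x y : Fin n → R) :
    cubicPartition ω (vecCons (cubeRoot ω s * b) x) (vecCons b y) =
      cornerFactor ω (cubeRoot ω s) b x y * cubicPartition ω x y := by
  cases s with
  | false => exact cubicPartition_cons_sq_mul hω b x y
  | true =>
    have hω₃ : ω ^ 3 = 1 := by linear_combination (ω - 1) * hω
    have hb : ω ^ 2 * (ω * b) = b := by linear_combination b * hω₃
    have h := cubicPartition_cons_sq_mul hω (ω * b) y x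
    rw [hb, cubicPartition_comm hω, cubicPartition_comm hω y x] at h
    rw [cubeRoot, h, cornerFactor, cornerFactor, ← pow_mul,
      show ω ^ (2 * 2) * (ω * b) = ω ^ 2 * b by linear_combination ω ^ 2 * b * hω₃,
      mul_comm (∏ i, (y i - _))]

/-- The points at which the partition function, as a function of a row spectral parameter, is
determined by a recursion when the column spectral parameters are `y`. -/
def nodes (ω : R) (y : Fin n → R) (p : Fin n × Bool) : R := cubeRoot ω p.2 * y p.1

theorem cubeRoot_ne_zero [Nontrivial R] [NoZeroDivisors R] (hω : ω ^ 2 + ω + 1 = 0) (s : Bool) :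
    cubeRoot ω s ≠ 0 := by
  have hω₀ : ω ≠ 0 := by
    rintro rfl
    simp at hω
  cases s <;> simp [cubeRoot, hω₀]

theorem cubeRoot_injective [IsDomain R] (hω : ω ^ 2 + ω + 1 = 0) (hω₁ : ω ≠ 1) :
    Function.Injective (cubeRoot ω) := by
  have hne : ω ≠ ω ^ 2 := fun h => hω₁
    (mul_left_cancel₀ (cubeRoot_ne_zero hω true) (by simpa [cubeRoot, ← sq] using h.symm))
  rintro (_ | _) (_ | _) h
  · rfl
  · exact absurd h hne.symm
  · exact absurd h hne
  · rfl

open MvPolynomial in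
theorem nodes_C_X_injective [IsDomain R] (hω : ω ^ 2 + ω + 1 = 0) (hω₁ : ω ≠ 1) :
    Function.Injective (nodes (C ω) (X : Fin n → MvPolynomial (Fin n) R)) := by
  have hC (s : Bool) : cubeRoot (C ω : MvPolynomial (Fin n) R) s = C (cubeRoot ω s) := by
    cases s <;> simp [cubeRoot]
  rintro ⟨i, s⟩ ⟨j, s'⟩ h
  simp only [nodes, hC, C_mul_X_eq_monomial, monomial_eq_monomial_iff,
    Finsupp.single_left_inj one_ne_zero, cubeRoot_ne_zero hω, false_and, or_false] at h
  rw [h.1, cubeRoot_injective hω hω₁ h.2]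

open Polynomial in
theorem cubicPartition_cons_comm_of_injective [IsDomain R] (hω : ω ^ 2 + ω + 1 = 0)
    {y : Fin (n + 1) → R} (hy : Function.Injective (nodes ω y))
    (ih : ∀ (a b : R) (x y : Fin n → R),
      cubicPartition ω (vecCons a x) (vecCons b y) = cubicPartition ω (vecCons b x) (vecCons a y))
    (a b t : R) (x : Fin n → R) :
    cubicPartition ω (vecCons t (vecCons a x)) (vecCons b y) =
      cubicPartition ω (vecCons t (vecCons b x)) (vecCons a y) := by
  let P (a b : R) : R[X] :=
    cubicPartition (C ω) (vecCons X (vecCons (C a) (C ∘ x))) (vecCons (C b) (C ∘ y))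
  have heval (a b t : R) :
      (P a b).eval t = cubicPartition ω (vecCons t (vecCons a x)) (vecCons b y) := by
    simp only [P, eval_cubicPartition, comp_vecCons, eval_comp_C_comp, eval_X, eval_C]
  have hdeg (a b : R) : (P a b).natDegree ≤ n + 1 := by
    refine (natDegree_cubicPartition_le ω _ _ fun j => ?_).trans ?_
    · cases j using Fin.cases <;> simp
    · simp [Fin.sum_univ_succ]
  have hnode (a b : R) (j : Fin (n + 1)) (s : Bool) :
      cubicPartition ω (vecCons (cubeRoot ω s * y j) (vecCons a x)) (vecCons b y) =
        -ω ^ 2 * ((a - cubeRoot ω s ^ 2 * y j) * (b - cubeRoot ω s ^ 2 * y j)) *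
          cornerFactor ω (cubeRoot ω s) (y j) x (j.removeNth y) *
          cubicPartition ω (vecCons a x) (vecCons b (j.removeNth y)) := by
    have hent : entries (vecCons b y) = entries (vecCons (y j) (vecCons b (j.removeNth y))) := by
      simp only [entries_cons, ← entries_cons_removeNth y j, Multiset.cons_swap b]
    rw [cubicPartition_congr_right hω _ hent, cubicPartition_cons_mul hω, cornerFactor_cons]
  have hP : P a b - P b a = 0 := by
    refine eq_zero_of_natDegree_lt_card_of_eval_eq_zero _ hy (fun ⟨j, s⟩ => ?_) ?_
    · rw [eval_sub, sub_eq_zero, heval, heval, nodes, hnode, hnode, ih a b]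
      ring
    · refine (natDegree_sub_le_of_le (hdeg a b) (hdeg b a)).trans_lt ?_
      simp
  rw [← heval, ← heval, sub_eq_zero.1 hP]

theorem mvEval_comp_X {σ : Type*} (z : σ → R) : MvPolynomial.eval z ∘ MvPolynomial.X = z := by
  ext
  simp

theorem mvEval_comp_C_comp {σ : Type*} (z : σ → R) (x : Fin n → R) :
    MvPolynomial.eval z ∘ MvPolynomial.C ∘ x = x := by
  ext
  simp

open MvPolynomial in
theorem cubicPartition_cons_comm [IsDomain R] (hω : ω ^ 2 + ω + 1 = 0) (hω₁ : ω ≠ 1) (a b : R)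
    (x y : Fin n → R) :
    cubicPartition ω (vecCons a x) (vecCons b y) =
      cubicPartition ω (vecCons b x) (vecCons a y) := by
  induction n generalizing R with
  | zero => rw [cubicPartition_fin_one, cubicPartition_fin_one]
  | succ n ih =>
    have hωC := map_sq_add_self_add_one (C : R →+* MvPolynomial (Fin (n + 1)) R) hω
    have hgen := cubicPartition_cons_comm_of_injective hωC (nodes_C_X_injective hω hω₁)
      (ih hωC ((map_ne_one_iff C (C_injective _ _)).2 hω₁)) (C a) (C b) (C (x 0)) (C ∘ Fin.tail x)
    have h := congrArg (eval y) hgen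
    simp only [map_cubicPartition, comp_vecCons, eval_C, mvEval_comp_X, mvEval_comp_C_comp] at h
    have hswap (p : R) :
        entries (vecCons p x) = entries (vecCons (x 0) (vecCons p (Fin.tail x))) := by
      simp only [entries_cons, ← entries_cons_removeNth x 0, Multiset.cons_swap p,
        Fin.removeNth_zero]
    rw [cubicPartition_congr_left hω _ (hswap a), h, cubicPartition_congr_left hω _ (hswap b)]

theorem cubicPartition_comp_swap_inl_inr [IsDomain R] (hω : ω ^ 2 + ω + 1 = 0) (hω₁ : ω ≠ 1)
    (z : Fin n ⊕ Fin n → R) (i j : Fin n) :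
    cubicPartition ω (z ∘ Equiv.swap (.inl i) (.inr j) ∘ .inl)
      (z ∘ Equiv.swap (.inl i) (.inr j) ∘ .inr) = cubicPartition ω (z ∘ .inl) (z ∘ .inr) := by
  obtain ⟨n, rfl⟩ := Nat.exists_eq_succ_of_ne_zero i.pos.ne'
  have hx : entries (z ∘ Equiv.swap (.inl i) (.inr j) ∘ .inl) =
      entries (vecCons (z (.inr j)) (i.removeNth (z ∘ .inl))) := by
    rw [← entries_cons_removeNth _ i]
    congr 2
    · simp
    · funext k
      simp [Fin.removeNth, Equiv.swap_apply_of_ne_of_ne]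
  have hy : entries (z ∘ Equiv.swap (.inl i) (.inr j) ∘ .inr) =
      entries (vecCons (z (.inl i)) (j.removeNth (z ∘ .inr))) := by
    rw [← entries_cons_removeNth _ j]
    congr 2
    · simp
    · funext k
      simp [Fin.removeNth, Equiv.swap_apply_of_ne_of_ne]
  rw [cubicPartition_congr_left hω _ hx, cubicPartition_congr_right hω _ hy,
    cubicPartition_cons_comm hω hω₁]
  exact (cubicPartition_congr_left hω _ (entries_cons_removeNth (z ∘ .inl) i)).trans
    (cubicPartition_congr_right hω _ (entries_cons_removeNth (z ∘ .inr) j))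

theorem cubicPartition_comp_swap [IsDomain R] (hω : ω ^ 2 + ω + 1 = 0) (hω₁ : ω ≠ 1)
    (z : Fin n ⊕ Fin n → R) (p q : Fin n ⊕ Fin n) :
    cubicPartition ω (z ∘ Equiv.swap p q ∘ .inl) (z ∘ Equiv.swap p q ∘ .inr) =
      cubicPartition ω (z ∘ .inl) (z ∘ .inr) := by
  rcases p with i | i <;> rcases q with j | j
  · have hl : Equiv.swap (.inl i) (.inl j) ∘ .inl = (.inl ∘ Equiv.swap i j : _ → Fin n ⊕ Fin n) :=
      funext fun k => by simp [Sum.inl_injective.swap_apply]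
    have hr : Equiv.swap (.inl i) (.inl j) ∘ .inr = (.inr : Fin n → Fin n ⊕ Fin n) :=
      funext fun k => by simp [Equiv.swap_apply_of_ne_of_ne]
    rw [hl, hr, ← Function.comp_assoc, cubicPartition_comp_perm_left hω]
  · exact cubicPartition_comp_swap_inl_inr hω hω₁ z i j
  · rw [Equiv.swap_comm]
    exact cubicPartition_comp_swap_inl_inr hω hω₁ z j i
  · have hl : Equiv.swap (.inr i) (.inr j) ∘ .inl = (.inl : Fin n → Fin n ⊕ Fin n) :=
      funext fun k => by simp [Equiv.swap_apply_of_ne_of_ne]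
    have hr : Equiv.swap (.inr i) (.inr j) ∘ .inr = (.inr ∘ Equiv.swap i j : _ → Fin n ⊕ Fin n) :=
      funext fun k => by simp [Sum.inr_injective.swap_apply]
    rw [hl, hr, ← Function.comp_assoc, cubicPartition_comp_perm_right hω]

theorem cubicPartition_congr [IsDomain R] (hω : ω ^ 2 + ω + 1 = 0) (hω₁ : ω ≠ 1)
    {x y x' y' : Fin n → R} (h : entries x + entries y = entries x' + entries y') :
    cubicPartition ω x y = cubicPartition ω x' y' := by
  have hperm (z : Fin n ⊕ Fin n → R) (σ : Equiv.Perm (Fin n ⊕ Fin n)) :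
      cubicPartition ω (z ∘ σ ∘ .inl) (z ∘ σ ∘ .inr) =
        cubicPartition ω (z ∘ .inl) (z ∘ .inr) := by
    induction σ using Equiv.Perm.swap_induction_on' with
    | one => rfl
    | mul_swap σ p q _ ih => exact (cubicPartition_comp_swap hω hω₁ (z ∘ σ) p q).trans ih
  obtain ⟨σ, hσ⟩ : ∃ σ : Equiv.Perm (Fin n ⊕ Fin n), Sum.elim x y = Sum.elim x' y' ∘ σ := by
    refine exists_perm_of_map_eq ?_
    rw [← univ_disjSum_univ, val_disjSum, Multiset.map_disjSum, Multiset.map_disjSum]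
    exact h
  calc cubicPartition ω x y
      = cubicPartition ω (Sum.elim x' y' ∘ σ ∘ .inl) (Sum.elim x' y' ∘ σ ∘ .inr) := by
        rw [← Function.comp_assoc, ← Function.comp_assoc, ← hσ, Sum.elim_comp_inl,
          Sum.elim_comp_inr]
    _ = cubicPartition ω x' y' := hperm _ σ

end symmetric

/-! ### A quadratic relation between partition functions of consecutive sizes -/

section quadDefect

variable {R S : Type*} [CommRing R] [CommRing S] {ω : R} {k : ℕ}

/-- The difference of the two sides of the quadratic relation between partition functions of sizes
`k`, `k + 1` and `k + 2`, obtained by adjoining two pairs of spectral parameters `a`, `c` and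
`b`, `d` to `x` and `y`. -/
noncomputable def quadDefect (ω a b c d : R) (x y : Fin k → R) : R :=
  ω ^ 2 * ((a - c) * (b - d)) *
      (cubicPartition ω (vecCons a (vecCons c x)) (vecCons b (vecCons d y)) *
        cubicPartition ω x y) -
    (cubicA ω a b * cubicB ω a b * (cubicA ω c d * cubicB ω c d) *
        (cubicPartition ω (vecCons a x) (vecCons d y) *
          cubicPartition ω (vecCons b x) (vecCons c y)) -
      cubicA ω a d * cubicB ω a d * (cubicA ω b c * cubicB ω b c) *
        (cubicPartition ω (vecCons a x) (vecCons b y) *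
          cubicPartition ω (vecCons c x) (vecCons d y)))

theorem map_quadDefect (f : R →+* S) (ω a b c d : R) (x y : Fin k → R) :
    f (quadDefect ω a b c d x y) = quadDefect (f ω) (f a) (f b) (f c) (f d) (f ∘ x) (f ∘ y) := by
  simp only [quadDefect, cubicA, cubicB, map_mul, map_sub, map_pow, map_cubicPartition,
    comp_vecCons]

theorem quadDefect_swap [IsDomain R] (hω : ω ^ 2 + ω + 1 = 0) (hω₁ : ω ≠ 1) (a b c d : R)
    (x y : Fin k → R) : quadDefect ω a d c b x y = -quadDefect ω a b c d x y := by
  have hcol : entries (vecCons d (vecCons b y)) = entries (vecCons b (vecCons d y)) := by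
    simp only [entries_cons, Multiset.cons_swap b]
  rw [quadDefect, quadDefect, cubicPartition_congr_right hω _ hcol,
    cubicPartition_cons_comm hω hω₁ d c, cubicPartition_cons_comm hω hω₁ c b]
  simp only [cubicA, cubicB]
  ring

theorem cubicA_mul_cubicB_cubeRoot_mul_self (hω : ω ^ 2 + ω + 1 = 0) (s : Bool) (b : R) :
    cubicA ω (cubeRoot ω s * b) b * cubicB ω (cubeRoot ω s * b) b = 0 := by
  cases s <;> grind [cubeRoot, cubicA, cubicB]

theorem cubicA_mul_cubicB_cubeRoot_mul (hω : ω ^ 2 + ω + 1 = 0) (s : Bool) (b c d : R) :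
    cubicA ω (cubeRoot ω s * b) d * cubicB ω (cubeRoot ω s * b) d *
        (cubicA ω b c * cubicB ω b c) =
      ω ^ 4 * ((cubeRoot ω s * b - c) * (b - d)) *
        ((c - cubeRoot ω s ^ 2 * b) * (d - cubeRoot ω s ^ 2 * b)) := by
  cases s <;> grind [cubeRoot, cubicA, cubicB]

theorem quadDefect_cubeRoot_mul (hω : ω ^ 2 + ω + 1 = 0) (s : Bool) (b c d : R)
    (x y : Fin k → R) : quadDefect ω (cubeRoot ω s * b) b c d x y = 0 := by
  rw [quadDefect, cubicA_mul_cubicB_cubeRoot_mul_self hω, cubicA_mul_cubicB_cubeRoot_mul hω,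
    cubicPartition_cons_mul hω, cubicPartition_cons_mul hω, cornerFactor_cons]
  ring

open Polynomial in
theorem natDegree_quadDefect_le (ω : R) {a b c d : R[X]} {x y : Fin k → R[X]}
    (hb : b.natDegree = 0) (hc : c.natDegree = 0) (hd : d.natDegree = 0)
    (hy : ∀ j, (y j).natDegree = 0) :
    (quadDefect (C ω) a b c d x y).natDegree ≤
      (k + 2) * a.natDegree + 2 * k * ∑ i, (x i).natDegree := by
  obtain ⟨b, rfl⟩ := natDegree_eq_zero.1 hb
  obtain ⟨c, rfl⟩ := natDegree_eq_zero.1 hc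
  obtain ⟨d, rfl⟩ := natDegree_eq_zero.1 hd
  have hcons (q : R) : ∀ j, (vecCons (C q) y j).natDegree = 0 :=
    Fin.cases (natDegree_C q) hy
  have hlarge := natDegree_cubicPartition_le ω (vecCons a (vecCons (C c) x))
    (vecCons (C b) (vecCons (C d) y)) (Fin.cases (natDegree_C b) (hcons d))
  have hmid (q : R) := natDegree_cubicPartition_le ω (vecCons a x) (vecCons (C q) y) (hcons q)
  have hmid' (p q : R) :=
    natDegree_cubicPartition_le ω (vecCons (C p) x) (vecCons (C q) y) (hcons q)
  have hsmall := natDegree_cubicPartition_le ω x y hy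
  simp only [Fin.sum_univ_succ, Matrix.cons_val_zero, Matrix.cons_val_succ, natDegree_C, zero_add,
    mul_add] at hlarge hmid hmid' hsmall
  have hlin : ((C ω : R[X]) ^ 2 * ((a - C c) * (C b - C d))).natDegree ≤ a.natDegree := by
    have h : (C ω : R[X]) ^ 2 * ((a - C c) * (C b - C d)) = C (ω ^ 2 * (b - d)) * (a - C c) := by
      simp only [map_mul, map_sub, map_pow]
      ring
    exact h ▸ (natDegree_C_mul_le _ _).trans natDegree_sub_C.le
  have hAB (a : R[X]) (q : R) :
      (cubicA (C ω) a (C q) * cubicB (C ω) a (C q)).natDegree ≤ a.natDegree + a.natDegree :=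
    natDegree_mul_le_of_le (natDegree_cubicA_le ω a (natDegree_C q))
      (natDegree_cubicB_le ω a (natDegree_C q))
  refine (natDegree_sub_le_of_le (natDegree_mul_le_of_le hlin
    (natDegree_mul_le_of_le hlarge hsmall)) (natDegree_sub_le_of_le
    (natDegree_mul_le_of_le (natDegree_mul_le_of_le (hAB _ _) (hAB _ _))
      (natDegree_mul_le_of_le (hmid d) (hmid' b c)))
    (natDegree_mul_le_of_le (natDegree_mul_le_of_le (hAB _ _) (hAB _ _))
      (natDegree_mul_le_of_le (hmid b) (hmid' c d))))).trans ?_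
  simp only [natDegree_C]
  rcases k with - | k
  · simp only [univ_eq_empty, sum_empty, mul_zero, zero_add, Nat.succ_eq_add_one, Nat.reduceAdd,
      Nat.add_one_sub_one, one_mul, zero_tsub, zero_mul]
    omega
  · simp only [Nat.add_sub_cancel]
    generalize ∑ i, (x i).natDegree = s
    refine max_le ?_ (max_le ?_ ?_) <;> grind

theorem quadDefect_cons_cubeRoot_mul [IsDomain R] (hω : ω ^ 2 + ω + 1 = 0) (hω₁ : ω ≠ 1)
    (s : Bool) (a b c d v : R) {x x' y' : Fin k → R} {y : Fin (k + 1) → R}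
    (h : entries x + entries y = v ::ₘ (entries x' + entries y')) :
    quadDefect ω a b c d (vecCons (cubeRoot ω s * v) x) y =
      ω ^ 4 * ((a - cubeRoot ω s ^ 2 * v) * (b - cubeRoot ω s ^ 2 * v) *
        ((c - cubeRoot ω s ^ 2 * v) * (d - cubeRoot ω s ^ 2 * v))) *
        cornerFactor ω (cubeRoot ω s) v x' y' ^ 2 * quadDefect ω a b c d x' y' := by
  set u := cubeRoot ω s with hu
  have hsmall : cubicPartition ω (vecCons (u * v) x) y =
      cornerFactor ω u v x' y' * cubicPartition ω x' y' := by
    rw [← cubicPartition_cons_mul hω]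
    refine cubicPartition_congr hω hω₁ ?_
    simp only [entries_cons, Multiset.cons_add, Multiset.add_cons, h]
    exact Multiset.cons_swap _ _ _
  have hmid (p q : R) : cubicPartition ω (vecCons p (vecCons (u * v) x)) (vecCons q y) =
      -ω ^ 2 * ((p - u ^ 2 * v) * (q - u ^ 2 * v)) * cornerFactor ω u v x' y' *
        cubicPartition ω (vecCons p x') (vecCons q y') := by
    rw [← cornerFactor_cons, ← cubicPartition_cons_mul hω]
    refine cubicPartition_congr hω hω₁ ?_
    simp only [entries_cons, Multiset.cons_add, Multiset.add_cons, h]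
    simp only [← hu, ← Multiset.singleton_add]
    abel
  have hlarge : cubicPartition ω (vecCons a (vecCons c (vecCons (u * v) x)))
      (vecCons b (vecCons d y)) =
      -ω ^ 2 * ((a - u ^ 2 * v) * (b - u ^ 2 * v)) *
        (-ω ^ 2 * ((c - u ^ 2 * v) * (d - u ^ 2 * v)) * cornerFactor ω u v x' y') *
        cubicPartition ω (vecCons a (vecCons c x')) (vecCons b (vecCons d y')) := by
    rw [← cornerFactor_cons, ← cornerFactor_cons, ← cubicPartition_cons_mul hω]
    refine cubicPartition_congr hω hω₁ ?_
    simp only [entries_cons, Multiset.cons_add, Multiset.add_cons, h]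
    simp only [← hu, ← Multiset.singleton_add]
    abel
  rw [quadDefect, hlarge, hsmall, hmid, hmid, hmid, hmid, quadDefect]
  ring

open Polynomial in
theorem eval_quadDefect (ω t : R) (a b c d : R[X]) (x y : Fin k → R[X]) :
    (quadDefect (C ω) a b c d x y).eval t =
      quadDefect ω (a.eval t) (b.eval t) (c.eval t) (d.eval t) (eval t ∘ x) (eval t ∘ y) := by
  simpa using map_quadDefect (evalRingHom t) (C ω) a b c d x y

open Polynomial in
theorem quadDefect_eq_zero_of_le_one_of_injective [IsDomain R] (hω : ω ^ 2 + ω + 1 = 0)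
    (hω₁ : ω ≠ 1) (hk : k ≤ 1) (a c : R) {z : Fin 2 → R} (hz : Function.Injective (nodes ω z))
    (x y : Fin k → R) : quadDefect ω a (z 0) c (z 1) x y = 0 := by
  let P : R[X] := quadDefect (C ω) X (C (z 0)) (C c) (C (z 1)) (C ∘ x) (C ∘ y)
  have heval (t : R) : P.eval t = quadDefect ω t (z 0) c (z 1) x y := by
    simp only [P, eval_quadDefect, eval_comp_C_comp, eval_X, eval_C]
  have hP : P = 0 := by
    refine eq_zero_of_natDegree_lt_card_of_eval_eq_zero _ hz (fun ⟨j, s⟩ => ?_) ?_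
    · rw [heval, nodes]
      fin_cases j
      · exact quadDefect_cubeRoot_mul hω s _ _ _ x y
      · rw [← neg_eq_zero, ← quadDefect_swap hω hω₁]
        exact quadDefect_cubeRoot_mul hω s _ _ _ x y
    · refine (natDegree_quadDefect_le ω (natDegree_C _) (natDegree_C _) (natDegree_C _)
        fun j => natDegree_C _).trans_lt ?_
      simp only [natDegree_X, natDegree_C, Function.comp_apply, sum_const_zero, Fintype.card_prod,
        Fintype.card_fin, Fintype.card_bool]
      omega
  rw [← heval, hP, eval_zero]

open MvPolynomial in
theorem quadDefect_eq_zero_of_le_one [IsDomain R] (hω : ω ^ 2 + ω + 1 = 0) (hω₁ : ω ≠ 1)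
    (hk : k ≤ 1) (a b c d : R) (x y : Fin k → R) : quadDefect ω a b c d x y = 0 := by
  have h := congrArg (eval ![b, d]) (quadDefect_eq_zero_of_le_one_of_injective
    (map_sq_add_self_add_one (C : R →+* MvPolynomial (Fin 2) R) hω)
    ((map_ne_one_iff C (C_injective _ _)).2 hω₁) hk (C a) (C c) (nodes_C_X_injective hω hω₁)
    (C ∘ x) (C ∘ y))
  simpa only [map_quadDefect, eval_C, eval_X, mvEval_comp_C_comp, map_zero,
    Matrix.cons_val_zero, Matrix.cons_val_one] using h

theorem entries_cons_zero_add_entries_tail {α : Type*} {m n : ℕ} (x : Fin m → α)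
    (z : Fin (n + 1) → α) :
    entries (vecCons (z 0) x) + entries (Fin.tail z) = entries x + entries z := by
  rw [← entries_cons_removeNth z 0, entries_cons, entries_cons, Fin.removeNth_zero,
    Multiset.cons_add, Multiset.add_cons]

open Polynomial in
theorem quadDefect_cons_eq_zero_of_injective [IsDomain R] (hω : ω ^ 2 + ω + 1 = 0) (hω₁ : ω ≠ 1)
    {a b c d : R} (ih : ∀ x y : Fin (k + 1) → R, quadDefect ω a b c d x y = 0)
    {z : Fin (k + 3) → R} (hz : Function.Injective (nodes ω z)) (t : R) (x : Fin k → R) :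
    quadDefect ω a b c d (vecCons t (vecCons (z 0) x)) (Fin.tail z) = 0 := by
  let P : R[X] := quadDefect (C ω) (C a) (C b) (C c) (C d) (vecCons X (vecCons (C (z 0)) (C ∘ x)))
    (C ∘ Fin.tail z)
  have heval (t : R) :
      P.eval t = quadDefect ω a b c d (vecCons t (vecCons (z 0) x)) (Fin.tail z) := by
    simp only [P, eval_quadDefect, comp_vecCons, eval_comp_C_comp, eval_X, eval_C]
  have hP : P = 0 := by
    refine eq_zero_of_natDegree_lt_card_of_eval_eq_zero _ hz (fun ⟨j, s⟩ => ?_) ?_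
    · have hent : entries (vecCons (z 0) x) + entries (Fin.tail z) =
          z j ::ₘ (entries (vecCons (j.removeNth z 0) x) + entries (Fin.tail (j.removeNth z))) := by
        rw [entries_cons_zero_add_entries_tail, entries_cons_zero_add_entries_tail,
          ← entries_cons_removeNth z j, entries_cons, Multiset.add_cons]
      rw [heval, nodes, quadDefect_cons_cubeRoot_mul hω hω₁ s a b c d _ hent, ih, mul_zero]
    · refine (natDegree_quadDefect_le ω (natDegree_C _) (natDegree_C _) (natDegree_C _)
        fun j => natDegree_C _).trans_lt ?_
      simp only [Fin.sum_univ_succ, Matrix.cons_val_zero, Matrix.cons_val_succ, natDegree_X,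
        natDegree_C, Function.comp_apply, sum_const_zero, Fintype.card_prod, Fintype.card_fin,
        Fintype.card_bool]
      omega
  rw [← heval, hP, eval_zero]

open MvPolynomial in
theorem quadDefect_eq_zero [IsDomain R] (hω : ω ^ 2 + ω + 1 = 0) (hω₁ : ω ≠ 1) (a b c d : R)
    (x y : Fin k → R) : quadDefect ω a b c d x y = 0 := by
  induction k using Nat.twoStepInduction generalizing R with
  | zero => exact quadDefect_eq_zero_of_le_one hω hω₁ zero_le_one a b c d x y
  | one => exact quadDefect_eq_zero_of_le_one hω hω₁ le_rfl a b c d x y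
  | more k _ ih =>
    have hωC := map_sq_add_self_add_one (C : R →+* MvPolynomial (Fin (k + 3)) R) hω
    have hωC₁ : (C ω : MvPolynomial (Fin (k + 3)) R) ≠ 1 :=
      (map_ne_one_iff C (C_injective _ _)).2 hω₁
    have hgen := quadDefect_cons_eq_zero_of_injective hωC hωC₁
      (ih hωC hωC₁ (C a) (C b) (C c) (C d)) (nodes_C_X_injective hω hω₁) (C (x 0))
      (C ∘ Fin.tail (Fin.tail x))
    have h := congrArg (eval (vecCons (x 1) y)) hgen
    have hX : eval (vecCons (x 1) y) ∘ Fin.tail X = y := by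
      ext
      simp [Fin.tail]
    have hx : vecCons (x 0) (vecCons (x 1) (Fin.tail (Fin.tail x))) = x := by
      ext j
      cases j using Fin.cases with
      | zero => rfl
      | succ j => cases j using Fin.cases <;> rfl
    simpa only [map_quadDefect, comp_vecCons, eval_C, eval_X, mvEval_comp_C_comp, map_zero, hX,
      Matrix.cons_val_zero, hx] using h

end quadDefect

/-! ### Weights concentrated on the boundary -/

section boundaryPartition

variable {R : Type*} [CommRing R] {m n : ℕ}

theorem iceWeight_congr {a b c a' b' c' : R} {l r t d : Bool} (ha : l ≠ t → r ≠ d → a = a')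
    (hb : l = d → r = t → b = b') (hc : l = true → t = true → r = false → d = false → c = c') :
    iceWeight a b c l r t d = iceWeight a' b' c' l r t d := by
  revert ha hb hc
  cases l <;> cases r <;> cases t <;> cases d <;> simp [iceWeight]

theorem icePartition_congr {a b c a' b' c' : Fin (n + 1) → Fin (n + 1) → R}
    (ha : ∀ i j, ¬(i = 0 ∧ j = 0) → ¬(i = Fin.last n ∧ j = Fin.last n) → a i j = a' i j)
    (hb : ∀ i j, ¬(i = 0 ∧ j = Fin.last n) → ¬(i = Fin.last n ∧ j = 0) → b i j = b' i j)
    (hc : ∀ i j, i ≠ 0 → i ≠ Fin.last n → j ≠ 0 → j ≠ Fin.last n → c i j = c' i j) :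
    icePartition a b c = icePartition a' b' c' := by
  refine sum_congr rfl fun e _ => ?_
  split_ifs with h
  · refine prod_congr rfl fun i _ => prod_congr rfl fun j _ => ?_
    have hl : j = 0 → edges (asmMat e i) j.castSucc = false := by rintro rfl; simp
    have ht : i = 0 → edges (fun i => asmMat e i j) i.castSucc = false := by rintro rfl; simp
    have hr : j = Fin.last n → edges (asmMat e i) j.succ = true := by
      rintro rfl
      exact (h.isAlternating_row i).edges_last
    have hd : i = Fin.last n → edges (fun i => asmMat e i j) i.succ = true := by
      rintro rfl
      exact (h.isAlternating_col j).edges_last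
    exact iceWeight_congr (fun hlt hrd => ha i j (by grind) (by grind))
      (fun hld hrt => hb i j (by grind) (by grind))
      fun hl' ht' hr' hd' => hc i j (by grind) (by grind) (by grind) (by grind)
  · rfl

theorem mul_icePartition_corner {a b b' b₀ c : Fin (n + 1) → Fin (n + 1) → R}
    (h' : ∀ i j, ¬(i = 0 ∧ j = 0) → b' i j = b i j)
    (h₀ : ∀ i j, ¬(i = 0 ∧ j = 0) → b₀ i j = b i j) (h₀₀ : b₀ 0 0 = 0) :
    b' 0 0 * icePartition a b c =
      b 0 0 * icePartition a b' c + (b' 0 0 - b 0 0) * icePartition a b₀ c := by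
  simp only [icePartition, mul_sum, ← sum_add_distrib]
  refine sum_congr rfl fun e _ => ?_
  split_ifs with h
  · have hprod (d : Fin (n + 1) → Fin (n + 1) → R)
        (hd : ∀ i j, ¬(i = 0 ∧ j = 0) → d i j = b i j) :
        ∏ i, ∏ j, vertexWeight a d c (asmMat e) i j =
          (if asmMat e 0 0 = 1 then 1 else d 0 0) *
            ∏ p ∈ univ.erase (0, 0), vertexWeight a b c (asmMat e) p.1 p.2 := by
      rw [← Fintype.prod_prod_type', ← mul_prod_erase univ _ (mem_univ (0, 0)),
        h.vertexWeight_zero_zero]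
      refine congrArg _ (prod_congr rfl fun p hp => ?_)
      rw [vertexWeight, vertexWeight, hd _ _ fun hp₀ => ne_of_mem_erase hp (Prod.ext hp₀.1 hp₀.2)]
    rw [hprod b fun _ _ _ => rfl, hprod b' h', hprod b₀ h₀, h₀₀]
    split_ifs <;> ring
  · simp

/-- The vector with first entry `u`, last entry `v`, and all other entries `1`. -/
def ends {α : Type*} [One α] (u v : α) (k : Fin (m + 2)) : α :=
  if k = 0 then u else if k = Fin.last (m + 1) then v else 1

section ends

variable {α : Type*} [One α] (u v : α)

@[simp]
theorem ends_zero : ends u v (0 : Fin (m + 2)) = u :=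
  if_pos rfl

@[simp]
theorem ends_last : ends u v (Fin.last (m + 1)) = v := by
  simp [ends]

@[simp]
theorem ends_succ_castSucc (k : Fin m) : ends u v k.castSucc.succ = 1 := by
  rw [ends, if_neg (Fin.succ_ne_zero _), if_neg]
  rw [← Fin.succ_last, Fin.succ_inj]
  exact k.castSucc_ne_last

theorem ends_rev (k : Fin (m + 2)) : ends u v k.rev = ends v u k := by
  simp only [ends, Fin.rev_eq_iff, Fin.rev_zero, Fin.rev_last]
  split_ifs with h h' <;> simp_all

end ends

/-- The weights on a pair of opposite sides of a square array: the entries of the last and of the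
first column are `z` and `z'`, except that `d` and `d'` are in the top right and in the bottom left
corner, and all other entries are `1`. -/
def sideWeight (z z' d d' : R) (i j : Fin (m + 2)) : R :=
  ends (if i = Fin.last (m + 1) then d' else z') (if i = 0 then d else z) j

theorem sideWeight_rev_right (z z' d d' : R) (i j : Fin (m + 2)) :
    sideWeight z z' d d' i j.rev =
      ends (if i = 0 then d else z) (if i = Fin.last (m + 1) then d' else z') j :=
  ends_rev ..

theorem sideWeight_rev (z z' d d' : R) (i j : Fin (m + 2)) :
    sideWeight z z' d d' i.rev j.rev = sideWeight z' z d' d i j := by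
  simp only [sideWeight, ends_rev, Fin.rev_eq_iff, Fin.rev_zero, Fin.rev_last]

theorem sideWeight_corner (z z' d d' : R) :
    sideWeight z z' d d' (0 : Fin (m + 2)) (Fin.rev 0) = d := by
  simp [sideWeight]

theorem sideWeight_congr (z z' d₁ d₂ d' : R) {i j : Fin (m + 2)} (h : ¬(i = 0 ∧ j = 0)) :
    sideWeight z z' d₁ d' j i.rev = sideWeight z z' d₂ d' j i.rev := by
  simp only [sideWeight_rev_right, ends]
  split_ifs <;> simp_all

/-- The partition function on the square of size `m + 2` whose weights are concentrated on the
boundary. The weights of the top, right, bottom and left sides are `z₁`, `z₂`, `z₃` and `z₄`, those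
of the top left, top right, bottom right and bottom left corners are `d₁`, `d₂`, `d₃` and `d₄`. -/
noncomputable def boundaryPartition (m : ℕ) (z₁ z₂ z₃ z₄ d₁ d₂ d₃ d₄ : R) : R :=
  icePartition (n := m + 2) (sideWeight z₂ z₄ d₂ d₄) (fun i j => sideWeight z₁ z₃ d₁ d₃ j i.rev)
    fun _ _ => 1

theorem boundaryPartition_rotate (z₁ z₂ z₃ z₄ d₁ d₂ d₃ d₄ : R) :
    boundaryPartition m z₁ z₂ z₃ z₄ d₁ d₂ d₃ d₄ = boundaryPartition m z₂ z₃ z₄ z₁ d₂ d₃ d₄ d₁ := by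
  rw [boundaryPartition, ← icePartition_transpose, ← icePartition_flip, boundaryPartition]
  simp only [sideWeight_rev]

theorem mul_boundaryPartition_corner (z₁ z₂ z₃ z₄ d₁ d₂ d₃ d₄ l : R) :
    l * boundaryPartition m z₁ z₂ z₃ z₄ d₁ d₂ d₃ d₄ =
      d₁ * boundaryPartition m z₁ z₂ z₃ z₄ l d₂ d₃ d₄ +
        (l - d₁) * boundaryPartition m z₁ z₂ z₃ z₄ 0 d₂ d₃ d₄ := by
  have h := mul_icePartition_corner (a := sideWeight z₂ z₄ d₂ d₄) (c := fun _ _ => 1)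
    (fun i j => sideWeight_congr (m := m) z₁ z₃ l d₁ d₃ (i := i) (j := j))
    (fun i j => sideWeight_congr z₁ z₃ 0 d₁ d₃) (sideWeight_corner z₁ z₃ 0 d₃)
  rwa [sideWeight_corner, sideWeight_corner] at h

theorem boundaryPartition_zero_corner (z₁ z₂ z₃ z₄ d₂ d₃ d₄ : R) :
    boundaryPartition m z₁ z₂ z₃ z₄ 0 d₂ d₃ d₄ = d₂ * (z₄ ^ m * d₄) *
      icePartition (n := m + 1) (fun _ j => if j = Fin.last m then z₂ else 1)
        (fun i j => if i = Fin.last m then (if j = Fin.last m then d₃ else z₃) else 1)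
        fun _ _ => 1 := by
  have hlast (k : Fin (m + 1)) : k.succ = Fin.last (m + 1) ↔ k = Fin.last m := by
    rw [← Fin.succ_last, Fin.succ_inj]
  rw [boundaryPartition, icePartition_eq_mul_of_corner_eq_zero _ _ _ (sideWeight_corner ..)]
  congr 1
  · congr 1
    · rw [Fin.prod_univ_castSucc]
      simp [sideWeight]
    · rw [Fin.prod_univ_castSucc]
      simp [sideWeight, hlast]
  · congr 1 <;> funext i j
    · simp [sideWeight, ends, hlast]
    · simp [sideWeight_rev_right, ends, hlast]

theorem boundaryPartition_succ_zero_corner (z₁ z₂ z₃ z₄ d₂ d₃ d₄ : R) :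
    boundaryPartition (m + 1) z₁ z₂ z₃ z₄ 0 d₂ d₃ d₄ =
      d₂ * (z₄ ^ (m + 1) * d₄) * boundaryPartition m 1 z₂ z₃ 1 1 z₂ d₃ 1 := by
  rw [boundaryPartition_zero_corner, boundaryPartition]
  congr 2
  · funext i j
    rcases eq_or_ne j 0 with rfl | hj <;> simp [sideWeight, ends, *]
  · funext i j
    simp only [sideWeight_rev_right, ends]
    rcases eq_or_ne i 0 with rfl | hi <;> simp [*]

theorem boundaryPartition_zero_opposite_corner (z w : R) :
    boundaryPartition m 1 z w 1 1 z 0 1 = z ^ (m + 1) * numASM (m + 1) := by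
  rw [boundaryPartition_rotate, boundaryPartition_rotate, boundaryPartition_zero_corner,
    ← icePartition_one, one_mul, pow_succ]
  simp only [ite_self]

/-- Every corner carries an entry `0` or `1`, so that the partition function is an affine function
of each corner weight; here all four of them are exchanged one after the other. -/
theorem mul_boundaryPartition_corners (z₁ z₂ z₃ z₄ l₁ l₂ l₃ l₄ : R) :
    l₁ * l₂ * l₃ * l₄ * boundaryPartition (m + 1) z₁ z₂ z₃ z₄ z₁ z₂ z₃ z₄ =
      z₁ * z₂ * z₃ * z₄ * boundaryPartition (m + 1) z₁ z₂ z₃ z₄ l₁ l₂ l₃ l₄ +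
      (l₃ - z₃) * l₂ * l₄ * z₄ * z₁ * z₂ ^ (m + 2) * boundaryPartition m 1 z₄ z₁ 1 1 z₄ l₁ 1 +
      (l₄ - z₄) * l₃ * l₁ * z₁ * z₂ * z₃ ^ (m + 2) * boundaryPartition m 1 z₁ z₂ 1 1 z₁ l₂ 1 +
      (l₁ - z₁) * l₄ * l₂ * z₂ * z₃ * z₄ ^ (m + 2) * boundaryPartition m 1 z₂ z₃ 1 1 z₂ l₃ 1 +
      (l₂ - z₂) * l₁ * l₃ * z₃ * z₄ * z₁ ^ (m + 2) * boundaryPartition m 1 z₃ z₄ 1 1 z₃ l₄ 1 +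
      ((l₁ - z₁) * (l₃ - z₃) * l₂ * l₄ * (z₂ * z₄) ^ (m + 2) +
        (l₂ - z₂) * (l₄ - z₄) * l₁ * l₃ * (z₁ * z₃) ^ (m + 2)) * numASM (m + 1) := by
  have hcorner (z₁ z₂ z₃ z₄ d₂ d₃ d₄ l : R) :
      l * boundaryPartition (m + 1) z₁ z₂ z₃ z₄ z₁ d₂ d₃ d₄ =
        z₁ * boundaryPartition (m + 1) z₁ z₂ z₃ z₄ l d₂ d₃ d₄ + (l - z₁) *
          (d₂ * (z₄ ^ (m + 1) * d₄) * boundaryPartition m 1 z₂ z₃ 1 1 z₂ d₃ 1) := by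
    rw [mul_boundaryPartition_corner, boundaryPartition_succ_zero_corner]
  have hopposite (z w l : R) : l * boundaryPartition m 1 z w 1 1 z w 1 =
      w * boundaryPartition m 1 z w 1 1 z l 1 + (l - w) * (z ^ (m + 1) * numASM (m + 1)) := by
    have hrotate (d : R) :
        boundaryPartition m 1 z w 1 1 z d 1 = boundaryPartition m w 1 1 z d 1 1 z := by
      rw [boundaryPartition_rotate, boundaryPartition_rotate]
    rw [← boundaryPartition_zero_opposite_corner z w, hrotate, hrotate, hrotate,
      mul_boundaryPartition_corner]
  have h₂ := hcorner z₂ z₃ z₄ z₁ z₃ z₄ l₁ l₂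
  have h₃ := hcorner z₃ z₄ z₁ z₂ z₄ l₁ l₂ l₃
  have h₄ := hcorner z₄ z₁ z₂ z₃ l₁ l₂ l₃ l₄
  simp only [← boundaryPartition_rotate z₁ z₂ z₃ z₄, ← boundaryPartition_rotate z₂ z₃ z₄ z₁,
    ← boundaryPartition_rotate z₃ z₄ z₁ z₂] at h₂ h₃ h₄
  linear_combination l₂ * l₃ * l₄ * hcorner z₁ z₂ z₃ z₄ z₂ z₃ z₄ l₁ + z₁ * l₃ * l₄ * h₂ +
    z₁ * z₂ * l₄ * h₃ + z₁ * z₂ * z₃ * h₄ +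
    (l₁ - z₁) * z₂ * z₄ ^ (m + 2) * l₂ * l₄ * hopposite z₂ z₃ l₃ +
    z₁ * (l₂ - z₂) * z₃ * z₁ ^ (m + 1) * l₁ * l₃ * hopposite z₃ z₄ l₄

end boundaryPartition

/-! ### Boundary statistics -/

section statistics

variable {R : Type*} [CommRing R] {m n : ℕ}

theorem card_zeros_before_single (p : Fin n) :
    #{j | (Pi.single p 1 : Fin n → ℤ) j = 0 ∧ ∃ j', j < j' ∧ (Pi.single p 1 : Fin n → ℤ) j' = 1} =
      (p : ℕ) := by
  rw [← Fin.card_Iio p]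
  congr 1
  ext j
  simp only [Pi.single_apply, mem_filter, mem_univ, true_and, mem_Iio]
  grind

theorem card_zeros_after_single (p : Fin n) :
    #{j | (Pi.single p 1 : Fin n → ℤ) j = 0 ∧ ∃ j', j' < j ∧ (Pi.single p 1 : Fin n → ℤ) j' = 1} =
      n - 1 - p := by
  rw [← Fin.card_Ioi p]
  congr 1
  ext j
  simp only [Pi.single_apply, mem_filter, mem_univ, true_and, mem_Ioi]
  grind

theorem edges_one (f : Fin (n + 1) → ℤ) : edges f (Fin.succ 0) = decide (f 0 = 1) := by
  rw [edges, Fin.partialSum_succ]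
  simp

theorem IsAlternating.edges_castSucc_last {f : Fin (n + 1) → ℤ} (h : IsAlternating f) :
    edges f (Fin.last n).castSucc = !decide (f (Fin.last n) = 1) := by
  have := h.eq_toInt_sub (Fin.last n)
  rw [Fin.succ_last, h.edges_last] at this
  rw [this]
  cases edges f (Fin.last n).castSucc <;> simp

theorem prod_iceWeight_single_before (p : Fin n) (x : R) :
    ∏ j, iceWeight 1 x 1 (edges (Pi.single p 1) j.castSucc) (edges (Pi.single p 1) j.succ) false
      (decide ((Pi.single p 1 : Fin n → ℤ) j = 1)) = x ^ (p : ℕ) := by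
  have hweight (j : Fin n) : iceWeight 1 x 1 (edges (Pi.single p 1) j.castSucc)
      (edges (Pi.single p 1) j.succ) false (decide ((Pi.single p 1 : Fin n → ℤ) j = 1)) =
      if j < p then x else 1 := by
    rcases lt_trichotomy j p with h | rfl | h
    · simp [edges_single, h, h.ne, h.not_gt, h.not_ge, iceWeight]
    · simp [edges_single, iceWeight]
    · simp [edges_single, h, h.ne', h.not_gt, h.le, iceWeight]
  rw [prod_congr rfl fun j _ => hweight j, prod_ite, prod_const, prod_const_one, mul_one,
    filter_gt_eq_Iio, Fin.card_Iio]

theorem prod_iceWeight_single_after (p : Fin n) (x : R) :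
    ∏ j, iceWeight x 1 1 (edges (Pi.single p 1) j.castSucc) (edges (Pi.single p 1) j.succ) false
      (decide ((Pi.single p 1 : Fin n → ℤ) j = 1)) = x ^ (n - 1 - p : ℕ) := by
  have hweight (j : Fin n) : iceWeight x 1 1 (edges (Pi.single p 1) j.castSucc)
      (edges (Pi.single p 1) j.succ) false (decide ((Pi.single p 1 : Fin n → ℤ) j = 1)) =
      if p < j then x else 1 := by
    rcases lt_trichotomy j p with h | rfl | h
    · simp [edges_single, h.ne, h.not_gt, h.not_ge, iceWeight]
    · simp [edges_single, iceWeight]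
    · simp [edges_single, h, h.ne', h.le, iceWeight]
  rw [prod_congr rfl fun j _ => hweight j, prod_ite, prod_const, prod_const_one, mul_one,
    filter_lt_eq_Ioi, Fin.card_Ioi]

theorem iceWeight_eq_mul (a b : R) (l r t d : Bool) :
    iceWeight a b 1 l r t d = iceWeight a 1 1 l r t d * iceWeight 1 b 1 l r t d := by
  cases l <;> cases r <;> cases t <;> cases d <;> simp [iceWeight]

theorem prod_vertexWeight_eq_mul (a b : Fin n → Fin n → R) (A : Fin n → Fin n → ℤ) :
    ∏ i, ∏ j, vertexWeight a b (fun _ _ => 1) A i j =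
      (∏ i, ∏ j, vertexWeight a (fun _ _ => 1) (fun _ _ => 1) A i j) *
        ∏ i, ∏ j, vertexWeight (fun _ _ => 1) b (fun _ _ => 1) A i j := by
  simp only [← prod_mul_distrib]
  exact prod_congr rfl fun i _ => prod_congr rfl fun j _ => iceWeight_eq_mul ..

variable {e : Fin (m + 2) → Fin (m + 2) → Fin 3}

theorem IsASM.prod_vertexWeight_row_zero (h : IsASM (asmMat e)) (x : R) :
    ∏ j, vertexWeight (fun _ _ => 1) (fun _ _ => x) (fun _ _ => 1) (asmMat e) 0 j =
      x ^ rhoT (asmMat e) := by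
  obtain ⟨p, hp⟩ := exists_eq_single_of_sum_eq_one
    (fun j => (h.isAlternating_col j).zero_nonneg) (h.isAlternating_row 0).sum_eq_one
  have hrho : rhoT (asmMat e) = p := (congrArg (fun f : Fin (m + 2) → ℤ =>
    #{j | f j = 0 ∧ ∃ j', j < j' ∧ f j' = 1}) hp).trans (card_zeros_before_single p)
  simp only [vertexWeight, edges_one, Fin.castSucc_zero, edges_zero, hp, hrho,
    prod_iceWeight_single_before]

theorem IsASM.prod_vertexWeight_row_last (h : IsASM (asmMat e)) (x : R) :
    ∏ j, vertexWeight (fun _ _ => 1) (fun _ _ => x) (fun _ _ => 1) (asmMat e) (Fin.last (m + 1)) j =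
      x ^ rhoB (asmMat e) := by
  obtain ⟨p, hp⟩ := exists_eq_single_of_sum_eq_one
    (fun j => (h.isAlternating_col j).last_nonneg) (h.isAlternating_row (Fin.last _)).sum_eq_one
  have hrho : rhoB (asmMat e) = m + 2 - 1 - p := (congrArg (fun f : Fin (m + 2) → ℤ =>
    #{j | f j = 0 ∧ ∃ j', j' < j ∧ f j' = 1}) hp).trans (card_zeros_after_single p)
  rw [hrho, ← prod_iceWeight_single_after]
  refine prod_congr rfl fun j _ => ?_
  rw [← iceWeight_flip, vertexWeight, (h.isAlternating_col j).edges_castSucc_last, Fin.succ_last,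
    (h.isAlternating_col j).edges_last, hp]
  rfl

theorem IsASM.prod_vertexWeight_col_zero (h : IsASM (asmMat e)) (x : R) :
    ∏ i, vertexWeight (fun _ _ => x) (fun _ _ => 1) (fun _ _ => 1) (asmMat e) i 0 =
      x ^ (m + 2 - 1 - rhoL (asmMat e)) := by
  obtain ⟨p, hp⟩ := exists_eq_single_of_sum_eq_one
    (fun i => (h.isAlternating_row i).zero_nonneg) (h.isAlternating_col 0).sum_eq_one
  have hrho : rhoL (asmMat e) = p := (congrArg (fun f : Fin (m + 2) → ℤ =>
    #{j | f j = 0 ∧ ∃ j', j < j' ∧ f j' = 1}) hp).trans (card_zeros_before_single p)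
  rw [hrho, ← prod_iceWeight_single_after]
  refine prod_congr rfl fun i _ => ?_
  rw [← iceWeight_transpose, vertexWeight, edges_one, Fin.castSucc_zero, edges_zero, hp,
    ← congrFun hp i]

theorem IsASM.prod_vertexWeight_col_last (h : IsASM (asmMat e)) (x : R) :
    ∏ i, vertexWeight (fun _ _ => x) (fun _ _ => 1) (fun _ _ => 1) (asmMat e) i (Fin.last (m + 1)) =
      x ^ (m + 2 - 1 - rhoR (asmMat e)) := by
  obtain ⟨p, hp⟩ := exists_eq_single_of_sum_eq_one
    (fun i => (h.isAlternating_row i).last_nonneg) (h.isAlternating_col (Fin.last _)).sum_eq_one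
  have hrho : rhoR (asmMat e) = m + 2 - 1 - p := (congrArg (fun f : Fin (m + 2) → ℤ =>
    #{j | f j = 0 ∧ ∃ j', j' < j ∧ f j' = 1}) hp).trans (card_zeros_after_single p)
  rw [hrho, Nat.sub_sub_self (Nat.le_sub_one_of_lt p.isLt), ← prod_iceWeight_single_before]
  refine prod_congr rfl fun i _ => ?_
  rw [← iceWeight_flip, ← iceWeight_transpose, vertexWeight,
    (h.isAlternating_row i).edges_castSucc_last, Fin.succ_last, (h.isAlternating_row i).edges_last,
    hp, ← congrFun hp i, Bool.not_false]

theorem prod_univ_eq_zero_mul_last (f : Fin (m + 2) → R) (hf : ∀ k : Fin m, f k.castSucc.succ = 1) :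
    ∏ k, f k = f 0 * f (Fin.last (m + 1)) := by
  rw [Fin.prod_univ_succ, Fin.prod_univ_castSucc, prod_eq_one fun k _ => hf k, one_mul,
    Fin.succ_last]

theorem IsASM.prod_vertexWeight_ends_row (h : IsASM (asmMat e)) (u v : R) :
    ∏ i, ∏ j, vertexWeight (fun _ _ => 1) (fun i _ => ends u v i) (fun _ _ => 1) (asmMat e) i j =
      u ^ rhoT (asmMat e) * v ^ rhoB (asmMat e) := by
  rw [prod_univ_eq_zero_mul_last]
  · simp only [vertexWeight, ends_zero, ends_last]
    exact congrArg₂ _ (h.prod_vertexWeight_row_zero u) (h.prod_vertexWeight_row_last v)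
  · simp only [vertexWeight, ends_succ_castSucc]
    exact fun k => prod_eq_one fun j _ => h.vertexWeight_one _ j

theorem IsASM.prod_vertexWeight_ends_col (h : IsASM (asmMat e)) (u v : R) :
    ∏ i, ∏ j, vertexWeight (fun _ j => ends u v j) (fun _ _ => 1) (fun _ _ => 1) (asmMat e) i j =
      u ^ (m + 2 - 1 - rhoL (asmMat e)) * v ^ (m + 2 - 1 - rhoR (asmMat e)) := by
  rw [prod_comm, prod_univ_eq_zero_mul_last]
  · simp only [vertexWeight, ends_zero, ends_last]
    exact congrArg₂ _ (h.prod_vertexWeight_col_zero u) (h.prod_vertexWeight_col_last v)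
  · simp only [vertexWeight, ends_succ_castSucc]
    exact fun k => prod_eq_one fun i _ => h.vertexWeight_one i _

theorem Zbarqua_eq_boundaryPartition (z₁ z₂ z₃ z₄ : R) :
    Zbarqua (m + 2) 1 1 z₁ z₂ z₃ z₄ = boundaryPartition m z₁ z₂ z₃ z₄ z₁ z₂ z₃ z₄ := by
  refine sum_congr rfl fun e _ => ?_
  split_ifs with h
  · have ha : sideWeight z₂ z₄ z₂ z₄ = fun _ j : Fin (m + 2) => ends z₄ z₂ j := by
      simp [funext_iff, sideWeight]
    have hb : (fun i j : Fin (m + 2) => sideWeight z₁ z₃ z₁ z₃ j i.rev) =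
        fun i _ => ends z₁ z₃ i := by
      simp [sideWeight_rev_right]
    rw [prod_vertexWeight_eq_mul, ha, hb, h.prod_vertexWeight_ends_row,
      h.prod_vertexWeight_ends_col]
    ring
  · rfl

theorem Zopp_eq_Zbarqua (n : ℕ) (z w : R) : Zopp n 1 1 z w = Zbarqua n 1 1 z 1 w 1 := by
  simp only [Zopp, Zqua, Zbarqua, one_pow]

end statistics

/-! ### Specialization of the spectral parameters -/

section gauge

variable {R : Type*} [CommRing R] {n : ℕ}

theorem iceWeight_gauge (u v a b c : R) (l r t d : Bool) :
    iceWeight (u * v * a) (u * v * b) ((u * v) ^ 2 * c) l r t d =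
      u ^ (1 + l.toNat - r.toNat) * v ^ (1 + t.toNat - d.toNat) * iceWeight a b c l r t d := by
  cases l <;> cases r <;> cases t <;> cases d <;> simp [iceWeight, mul_pow]

theorem icePartition_gauge (u v : Fin (n + 1) → R) (a b c : Fin (n + 1) → Fin (n + 1) → R) :
    icePartition (fun i j => u i * v j * a i j) (fun i j => u i * v j * b i j)
        (fun i j => (u i * v j) ^ 2 * c i j) =
      ((∏ i, u i) * ∏ j, v j) ^ n * icePartition a b c := by
  rw [icePartition, icePartition, mul_sum]
  refine sum_congr rfl fun e _ => ?_
  split_ifs with h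
  · have hrow (i : Fin (n + 1)) := (h.isAlternating_row i).sum_one_add_sub_edges
    have hcol (j : Fin (n + 1)) := (h.isAlternating_col j).sum_one_add_sub_edges
    simp only [vertexWeight, iceWeight_gauge, prod_mul_distrib]
    rw [prod_comm (f := fun i j => v j ^ _)]
    simp only [prod_pow_eq_pow_sum, hrow, hcol, prod_pow, mul_pow]
  · rw [mul_zero]

end gauge

section cornerPartition

variable {R S : Type*} [CommRing R] [CommRing S] {m : ℕ}

/-- The partition function on the square of size `m + 2` with boundary weights `z₁`, `z₂`, `z₃` and
`z₄` for which the weight of each corner is determined by those of the two adjacent sides. These are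
the corner weights for which it is a specialization of `cubicPartition`. -/
noncomputable def cornerPartition (m : ℕ) (z₁ z₂ z₃ z₄ : R) : R :=
  boundaryPartition m z₁ z₂ z₃ z₄ (z₄ * z₁ - z₄ + 1) (z₁ * z₂ - z₁ + 1) (z₂ * z₃ - z₂ + 1)
    (z₃ * z₄ - z₃ + 1)

theorem map_cornerPartition (f : R →+* S) (z₁ z₂ z₃ z₄ : R) :
    f (cornerPartition m z₁ z₂ z₃ z₄) = cornerPartition m (f z₁) (f z₂) (f z₃) (f z₄) := by
  simp only [cornerPartition, boundaryPartition, map_icePartition, sideWeight, ends, apply_ite f,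
    map_add, map_sub, map_mul, map_one]
  rfl

theorem map_Zopp (f : R →+* S) (n : ℕ) (z w : R) :
    f (Zopp n 1 1 z w) = Zopp n 1 1 (f z) (f w) := by
  simp only [Zopp, Zqua, map_sum, apply_ite f, map_mul, map_pow, map_one, map_zero]

theorem Zopp_eq_cornerPartition (z w : R) : Zopp (m + 2) 1 1 z w = cornerPartition m z 1 w 1 := by
  rw [Zopp_eq_Zbarqua, Zbarqua_eq_boundaryPartition, cornerPartition]
  congr 1 <;> ring

theorem Zopp_comm (z w : R) : Zopp (m + 2) 1 1 z w = Zopp (m + 2) 1 1 w z := by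
  simp only [Zopp_eq_Zbarqua, Zbarqua_eq_boundaryPartition]
  rw [boundaryPartition_rotate, boundaryPartition_rotate]

theorem boundaryPartition_eq_cornerPartition (z w : R) :
    boundaryPartition m 1 z w 1 1 z (z * w - z + 1) 1 = cornerPartition m 1 z w 1 := by
  rw [cornerPartition]
  congr 1 <;> ring

theorem ends_mul_ends_sub_left (z₁ z₂ z₃ z₄ : R) {i j : Fin (m + 2)} (h₀ : ¬(i = 0 ∧ j = 0))
    (h : ¬(i = Fin.last (m + 1) ∧ j = Fin.last (m + 1))) :
    ends z₁ z₃ i * ends z₄ z₂ j - ends z₁ z₃ i + 1 =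
      sideWeight z₂ z₄ (z₁ * z₂ - z₁ + 1) (z₃ * z₄ - z₃ + 1) i j := by
  simp only [sideWeight, ends]
  split_ifs <;> first | ring1 | simp_all

theorem ends_mul_ends_sub_right (z₁ z₂ z₃ z₄ : R) {i j : Fin (m + 2)}
    (h₀ : ¬(i = 0 ∧ j = Fin.last (m + 1))) (h : ¬(i = Fin.last (m + 1) ∧ j = 0)) :
    ends z₁ z₃ i * ends z₄ z₂ j - ends z₄ z₂ j + 1 =
      sideWeight z₁ z₃ (z₄ * z₁ - z₄ + 1) (z₂ * z₃ - z₂ + 1) j i.rev := by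
  rw [← ends_mul_ends_sub_left, ends_rev, mul_comm]
  · rwa [Fin.rev_eq_iff, Fin.rev_zero, and_comm]
  · rwa [Fin.rev_eq_iff, Fin.rev_last, and_comm]

theorem entries_comp_ends {α β : Type*} [One α] (f : α → β) (u v : α) :
    entries (f ∘ ends u v : Fin (m + 2) → β) = f u ::ₘ f v ::ₘ entries fun _ : Fin m => f 1 := by
  rw [← entries_cons_removeNth _ 0, entries_cons, ← entries_cons_removeNth _ (Fin.last m),
    entries_cons]
  simp [Fin.removeNth_zero, Fin.init_def, Fin.tail_def]

end cornerPartition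

section spectral

variable {K : Type*} [Field K] {ω z w z₁ z₂ z₃ z₄ : K} {m : ℕ}

/-- The spectral parameter that produces the boundary weight `z` when the spectral parameters of the
other rows and columns are `1`. -/
def spectral (ω z : K) : K := (z + ω ^ 2) / (1 + ω ^ 2 * z)

/-- The factor by which the weights of a row or of a column with spectral parameter `spectral ω z`
differ from normalized ones. -/
def spectralScale (ω z : K) : K := -ω / (1 + ω ^ 2 * z)

theorem one_add_sq_mul_one_ne_zero (hω : ω ^ 2 + ω + 1 = 0) : 1 + ω ^ 2 * 1 ≠ 0 := by
  intro h
  have hω₀ : ω = 0 := by linear_combination hω - h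
  simp [hω₀] at hω

theorem spectral_one (hω : ω ^ 2 + ω + 1 = 0) : spectral ω 1 = 1 := by
  rw [spectral, div_eq_one_iff_eq (one_add_sq_mul_one_ne_zero hω), mul_one]

theorem spectralScale_one (hω : ω ^ 2 + ω + 1 = 0) : spectralScale ω 1 = 1 := by
  rw [spectralScale, div_eq_one_iff_eq (one_add_sq_mul_one_ne_zero hω)]
  linear_combination -hω

theorem spectralScale_ne_zero (hω : ω ^ 2 + ω + 1 = 0) (hz : 1 + ω ^ 2 * z ≠ 0) :
    spectralScale ω z ≠ 0 := by
  refine div_ne_zero (neg_ne_zero.2 fun h => ?_) hz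
  simp [h] at hω

theorem one_sub_sq_ne_zero (hω : ω ^ 2 + ω + 1 = 0) (hω₁ : ω ≠ 1) : 1 - ω ^ 2 ≠ 0 := by
  contrapose! hω₁
  linear_combination (ω - 1) * hω + ω * hω₁

theorem spectral_eq_mul (hω : ω ^ 2 + ω + 1 = 0) (z : K) :
    spectral ω z = -((ω ^ 2 * z + ω) * spectralScale ω z) := by
  rw [spectral, spectralScale, mul_div_assoc', ← neg_div]
  congr 1
  linear_combination -(ω - 1) * z * hω

theorem mul_spectralScale (hz : 1 + ω ^ 2 * z ≠ 0) :
    (1 + ω ^ 2 * z) * spectralScale ω z = -ω :=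
  mul_div_cancel₀ _ hz

theorem cubicA_spectral (hω : ω ^ 2 + ω + 1 = 0) (hz : 1 + ω ^ 2 * z ≠ 0)
    (hw : 1 + ω ^ 2 * w ≠ 0) : cubicA ω (spectral ω z) (spectral ω w) =
      (1 - ω ^ 2) * spectralScale ω z * spectralScale ω w * (z * w - z + 1) := by
  rw [cubicA, spectral_eq_mul hω, spectral_eq_mul hω]
  have hz' := mul_spectralScale hz
  have hw' := mul_spectralScale hw
  grind

theorem cubicB_spectral (hω : ω ^ 2 + ω + 1 = 0) (hz : 1 + ω ^ 2 * z ≠ 0)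
    (hw : 1 + ω ^ 2 * w ≠ 0) : cubicB ω (spectral ω z) (spectral ω w) =
      (1 - ω ^ 2) * spectralScale ω z * spectralScale ω w * (z * w - w + 1) := by
  have h := cubicA_spectral hω hw hz
  rw [cubicB, ← cubicA, h]
  ring

theorem spectral_sub_spectral (hω : ω ^ 2 + ω + 1 = 0) (hz : 1 + ω ^ 2 * z ≠ 0)
    (hw : 1 + ω ^ 2 * w ≠ 0) : spectral ω z - spectral ω w =
      (1 - ω) * ω * spectralScale ω z * spectralScale ω w * (z - w) := by
  rw [spectral_eq_mul hω, spectral_eq_mul hω]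
  have hz' := mul_spectralScale hz
  have hw' := mul_spectralScale hw
  grind

theorem cubicPartition_one (hω : ω ^ 2 + ω + 1 = 0) :
    cubicPartition ω (fun _ : Fin (m + 1) => 1) (fun _ => 1) =
      (1 - ω ^ 2) ^ ((m + 1) * m) * numASM (m + 1) := by
  have h := icePartition_gauge (n := m) (fun _ => 1 - ω ^ 2) (fun _ => 1) (fun _ _ => 1)
    (fun _ _ => 1) fun _ _ => 1
  simp only [prod_const, card_univ, Fintype.card_fin, one_pow, mul_one, icePartition_one,
    ← pow_mul] at h
  have hc : (1 - ω ^ 2) ^ 2 = -(3 * ω ^ 2) := by linear_combination (ω ^ 2 - ω + 1) * hω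
  simp only [← h, cubicPartition, cubicA, cubicB, cubicC, mul_one, hc]

theorem one_add_sq_mul_ends_ne_zero (hω : ω ^ 2 + ω + 1 = 0) (hz : 1 + ω ^ 2 * z ≠ 0)
    (hw : 1 + ω ^ 2 * w ≠ 0) (i : Fin (m + 2)) : 1 + ω ^ 2 * ends z w i ≠ 0 := by
  have h₁ := one_add_sq_mul_one_ne_zero hω
  unfold ends
  split_ifs <;> assumption

theorem prod_spectralScale_ends (hω : ω ^ 2 + ω + 1 = 0) (z w : K) :
    ∏ i : Fin (m + 2), spectralScale ω (ends z w i) = spectralScale ω z * spectralScale ω w := by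
  rw [prod_univ_eq_zero_mul_last _ fun k => by rw [ends_succ_castSucc, spectralScale_one hω],
    ends_zero, ends_last]

theorem cubicPartition_spectral_comp_ends (hω : ω ^ 2 + ω + 1 = 0) (h₁ : 1 + ω ^ 2 * z₁ ≠ 0)
    (h₂ : 1 + ω ^ 2 * z₂ ≠ 0) (h₃ : 1 + ω ^ 2 * z₃ ≠ 0) (h₄ : 1 + ω ^ 2 * z₄ ≠ 0) :
    cubicPartition ω (spectral ω ∘ ends z₁ z₃ : Fin (m + 2) → K) (spectral ω ∘ ends z₄ z₂) =
      (1 - ω ^ 2) ^ ((m + 2) * (m + 1)) *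
        (spectralScale ω z₁ * spectralScale ω z₂ * spectralScale ω z₃ *
          spectralScale ω z₄) ^ (m + 1) * cornerPartition m z₁ z₂ z₃ z₄ := by
  have hne := one_add_sq_mul_ends_ne_zero (m := m) hω h₁ h₃
  have hne' := one_add_sq_mul_ends_ne_zero (m := m) hω h₄ h₂
  have hgauge : (∏ i : Fin (m + 2), (1 - ω ^ 2) * spectralScale ω (ends z₁ z₃ i)) *
      ∏ j : Fin (m + 2), spectralScale ω (ends z₄ z₂ j) =
      (1 - ω ^ 2) ^ (m + 2) * (spectralScale ω z₁ * spectralScale ω z₂ * spectralScale ω z₃ *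
        spectralScale ω z₄) := by
    rw [prod_mul_distrib, prod_spectralScale_ends hω, prod_spectralScale_ends hω, prod_const,
      card_univ, Fintype.card_fin]
    ring
  rw [pow_mul, ← mul_pow, ← hgauge, cornerPartition, boundaryPartition, ← icePartition_gauge]
  refine icePartition_congr (fun i j h₀ h => ?_) (fun i j h₀ h => ?_) fun i j hi₀ hi hj₀ hj => ?_
  · rw [← ends_mul_ends_sub_left z₁ z₂ z₃ z₄ h₀ h]
    exact cubicA_spectral hω (hne i) (hne' j)
  · rw [← ends_mul_ends_sub_right z₁ z₂ z₃ z₄ h₀ h]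
    exact cubicB_spectral hω (hne i) (hne' j)
  · simp only [Function.comp_apply, ends, hi₀, hi, hj₀, hj, if_false, spectral_one hω,
      spectralScale_one hω, cubicC]
    linear_combination -(ω ^ 2 - ω + 1) * hω

theorem cubicPartition_cons_spectral (hω : ω ^ 2 + ω + 1 = 0) (hω₁ : ω ≠ 1)
    (hz : 1 + ω ^ 2 * z ≠ 0) (hw : 1 + ω ^ 2 * w ≠ 0) :
    cubicPartition ω (vecCons (spectral ω z) fun _ : Fin (m + 1) => 1)
        (vecCons (spectral ω w) fun _ => 1) =
      (1 - ω ^ 2) ^ ((m + 2) * (m + 1)) * (spectralScale ω z * spectralScale ω w) ^ (m + 1) *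
        Zopp (m + 2) 1 1 z w := by
  have h₁ := one_add_sq_mul_one_ne_zero hω
  have h := cubicPartition_spectral_comp_ends (m := m) hω hz h₁ hw h₁
  rw [spectralScale_one hω, mul_one, mul_one, ← Zopp_eq_cornerPartition] at h
  have hone : entries (fun _ : Fin (m + 1) => (1 : K)) = 1 ::ₘ entries fun _ : Fin m => 1 := by
    rw [← entries_cons]
    congr 1
    exact funext <| Fin.cases rfl fun _ => rfl
  rw [← h]
  refine cubicPartition_congr hω hω₁ ?_
  rw [entries_comp_ends, entries_comp_ends, entries_cons, entries_cons, hone, spectral_one hω]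
  simp only [← Multiset.singleton_add]
  abel

theorem cornerPartition_one_left_of_ne_zero (hω : ω ^ 2 + ω + 1 = 0) (hω₁ : ω ≠ 1)
    (hz : 1 + ω ^ 2 * z ≠ 0) (hw : 1 + ω ^ 2 * w ≠ 0) :
    cornerPartition m 1 z w 1 = Zopp (m + 2) 1 1 z w := by
  have h₁ := one_add_sq_mul_one_ne_zero hω
  have h := cubicPartition_spectral_comp_ends (m := m) hω h₁ hz hw h₁
  have h' := cubicPartition_spectral_comp_ends (m := m) hω hz h₁ hw h₁
  rw [spectralScale_one hω, mul_one, one_mul] at h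
  rw [spectralScale_one hω, mul_one, mul_one, ← Zopp_eq_cornerPartition] at h'
  have hne := mul_ne_zero (pow_ne_zero ((m + 2) * (m + 1)) (one_sub_sq_ne_zero hω hω₁))
    (pow_ne_zero (m + 1)
      (mul_ne_zero (spectralScale_ne_zero hω hz) (spectralScale_ne_zero hω hw)))
  refine mul_left_cancel₀ hne ?_
  rw [← h, ← h']
  refine cubicPartition_congr hω hω₁ ?_
  simp only [entries_comp_ends, ← Multiset.singleton_add]
  abel

theorem cubicPartition_cons_cons_spectral (hω : ω ^ 2 + ω + 1 = 0) (hω₁ : ω ≠ 1)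
    (h₁ : 1 + ω ^ 2 * z₁ ≠ 0) (h₂ : 1 + ω ^ 2 * z₂ ≠ 0) (h₃ : 1 + ω ^ 2 * z₃ ≠ 0)
    (h₄ : 1 + ω ^ 2 * z₄ ≠ 0) :
    cubicPartition ω (vecCons (spectral ω z₁) (vecCons (spectral ω z₃) fun _ : Fin m => 1))
        (vecCons (spectral ω z₂) (vecCons (spectral ω z₄) fun _ => 1)) =
      (1 - ω ^ 2) ^ ((m + 2) * (m + 1)) *
        (spectralScale ω z₁ * spectralScale ω z₂ * spectralScale ω z₃ *
          spectralScale ω z₄) ^ (m + 1) * cornerPartition m z₁ z₂ z₃ z₄ := by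
  rw [← cubicPartition_spectral_comp_ends hω h₁ h₂ h₃ h₄]
  refine cubicPartition_congr hω hω₁ ?_
  simp only [entries_comp_ends, entries_cons, spectral_one hω, ← Multiset.singleton_add]
  abel

theorem cornerPartition_mul_numASM_of_ne_zero (hω : ω ^ 2 + ω + 1 = 0) (hω₁ : ω ≠ 1)
    (h₁ : 1 + ω ^ 2 * z₁ ≠ 0) (h₂ : 1 + ω ^ 2 * z₂ ≠ 0) (h₃ : 1 + ω ^ 2 * z₃ ≠ 0)
    (h₄ : 1 + ω ^ 2 * z₄ ≠ 0) :
    cornerPartition (m + 1) z₁ z₂ z₃ z₄ * numASM (m + 1) * ((z₁ - z₃) * (z₂ - z₄)) =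
      (z₁ * z₂ - z₁ + 1) * (z₁ * z₂ - z₂ + 1) * (z₃ * z₄ - z₃ + 1) * (z₃ * z₄ - z₄ + 1) *
          Zopp (m + 2) 1 1 z₄ z₁ * Zopp (m + 2) 1 1 z₂ z₃ -
        (z₄ * z₁ - z₄ + 1) * (z₄ * z₁ - z₁ + 1) * (z₂ * z₃ - z₂ + 1) * (z₂ * z₃ - z₃ + 1) *
          Zopp (m + 2) 1 1 z₁ z₂ * Zopp (m + 2) 1 1 z₃ z₄ := by
  have h := quadDefect_eq_zero hω hω₁ (spectral ω z₁) (spectral ω z₂) (spectral ω z₃)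
    (spectral ω z₄) (fun _ : Fin (m + 1) => 1) fun _ => 1
  rw [quadDefect, cubicPartition_cons_cons_spectral hω hω₁ h₁ h₂ h₃ h₄, cubicPartition_one hω,
    cubicPartition_cons_spectral hω hω₁ h₁ h₄, cubicPartition_cons_spectral hω hω₁ h₂ h₃,
    cubicPartition_cons_spectral hω hω₁ h₁ h₂, cubicPartition_cons_spectral hω hω₁ h₃ h₄,
    spectral_sub_spectral hω h₁ h₃, spectral_sub_spectral hω h₂ h₄, cubicA_spectral hω h₁ h₂,
    cubicB_spectral hω h₁ h₂, cubicA_spectral hω h₃ h₄, cubicB_spectral hω h₃ h₄,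
    cubicA_spectral hω h₁ h₄, cubicB_spectral hω h₁ h₄, cubicA_spectral hω h₂ h₃,
    cubicB_spectral hω h₂ h₃] at h
  rw [Zopp_comm z₄ z₁]
  have hne := mul_ne_zero (pow_ne_zero (2 * ((m + 2) * (m + 1)) + 4) (one_sub_sq_ne_zero hω hω₁))
    (pow_ne_zero (m + 3) (mul_ne_zero (mul_ne_zero (mul_ne_zero (spectralScale_ne_zero hω h₁)
      (spectralScale_ne_zero hω h₂)) (spectralScale_ne_zero hω h₃)) (spectralScale_ne_zero hω h₄)))
  have hκ : ω ^ 2 * ((1 - ω) * ω) ^ 2 = (1 - ω ^ 2) ^ 2 := by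
    linear_combination (1 - ω) ^ 2 * (ω ^ 2 - ω - 1) * hω
  refine mul_left_cancel₀ hne ?_
  generalize 1 - ω ^ 2 = κ at *
  linear_combination h - κ ^ (2 * ((m + 2) * (m + 1)) + 2) *
    (spectralScale ω z₁ * spectralScale ω z₂ * spectralScale ω z₃ * spectralScale ω z₄) ^ (m + 3) *
    (cornerPartition (m + 1) z₁ z₂ z₃ z₄ * numASM (m + 1) * ((z₁ - z₃) * (z₂ - z₄))) * hκ

end spectral

/-! ### Identities over arbitrary commutative rings and the main theorem -/

section baseChange

theorem one_add_sq_mul_ne_zero {K : Type*} [Field K] {ω z : K} (hω : ω ^ 2 + ω + 1 = 0)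
    (hz : z ^ 2 - z + 1 ≠ 0) : 1 + ω ^ 2 * z ≠ 0 := by
  intro h
  have hzω : z = -ω := by linear_combination ω * h - (ω - 1) * z * hω
  refine hz ?_
  rw [hzω]
  linear_combination hω

open Polynomial in
theorem exists_sq_add_self_add_one_eq_zero (L : Type*) [Field L] [IsAlgClosed L] :
    ∃ ω : L, ω ^ 2 + ω + 1 = 0 := by
  have hdeg : (X ^ 2 + X + 1 : L[X]).degree = 2 := by compute_degree!
  obtain ⟨ω, h⟩ := IsAlgClosed.exists_root (X ^ 2 + X + 1 : L[X]) (by simp [hdeg])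
  exact ⟨ω, by simpa using h⟩

open MvPolynomial (X)

theorem exists_injective_ringHom_field.{u} (σ : Type u) :
    ∃ (L : Type u) (_ : Field L) (f : MvPolynomial σ ℤ →+* L) (ω : L), Function.Injective f ∧
      ω ^ 2 + ω + 1 = 0 ∧ ω ≠ 1 ∧ ∀ i, 1 + ω ^ 2 * f (X i) ≠ 0 := by
  let F := FractionRing (MvPolynomial σ ℤ)
  let f := (algebraMap F (AlgebraicClosure F)).comp (algebraMap (MvPolynomial σ ℤ) F)
  have hf : Function.Injective f :=
    (algebraMap F (AlgebraicClosure F)).injective.comp (IsFractionRing.injective _ F)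
  obtain ⟨ω, hω⟩ := exists_sq_add_self_add_one_eq_zero (AlgebraicClosure F)
  refine ⟨AlgebraicClosure F, inferInstance, f, ω, hf, hω, ?_, fun i => ?_⟩
  · rintro rfl
    norm_num at hω
  · refine one_add_sq_mul_ne_zero hω fun h => ?_
    rw [← map_pow, ← map_sub, ← map_one f, ← map_add, map_eq_zero_iff f hf] at h
    simpa using congrArg (MvPolynomial.eval fun _ => (0 : ℤ)) h

variable {R : Type*} [CommRing R] {m : ℕ}

theorem cornerPartition_one_left (z w : R) : cornerPartition m 1 z w 1 = Zopp (m + 2) 1 1 z w := by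
  obtain ⟨L, _, f, ω, hf, hω, hω₁, h⟩ := exists_injective_ringHom_field (Fin 2)
  have hX := cornerPartition_one_left_of_ne_zero (m := m) hω hω₁ (h 0) (h 1)
  rw [← map_Zopp, ← map_one f, ← map_cornerPartition] at hX
  simpa only [map_cornerPartition, map_Zopp, map_one, MvPolynomial.eval₂Hom_X',
    Matrix.cons_val] using congrArg (MvPolynomial.eval₂Hom (Int.castRingHom R) ![z, w]) (hf hX)

theorem cornerPartition_mul_numASM (z₁ z₂ z₃ z₄ : R) :
    cornerPartition (m + 1) z₁ z₂ z₃ z₄ * numASM (m + 1) * ((z₁ - z₃) * (z₂ - z₄)) =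
      (z₁ * z₂ - z₁ + 1) * (z₁ * z₂ - z₂ + 1) * (z₃ * z₄ - z₃ + 1) * (z₃ * z₄ - z₄ + 1) *
          Zopp (m + 2) 1 1 z₄ z₁ * Zopp (m + 2) 1 1 z₂ z₃ -
        (z₄ * z₁ - z₄ + 1) * (z₄ * z₁ - z₁ + 1) * (z₂ * z₃ - z₂ + 1) * (z₂ * z₃ - z₃ + 1) *
          Zopp (m + 2) 1 1 z₁ z₂ * Zopp (m + 2) 1 1 z₃ z₄ := by
  obtain ⟨L, _, f, ω, hf, hω, hω₁, h⟩ := exists_injective_ringHom_field (Fin 4)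
  have hX := cornerPartition_mul_numASM_of_ne_zero (m := m) hω hω₁ (h 0) (h 1) (h 2) (h 3)
  simp only [← map_cornerPartition, ← map_Zopp, ← map_natCast f] at hX
  simp only [← map_one f, ← map_mul, ← map_sub, ← map_add] at hX
  simpa only [map_cornerPartition, map_Zopp, map_mul, map_sub, map_add, map_one, map_natCast,
    MvPolynomial.eval₂Hom_X', Matrix.cons_val] using
    congrArg (MvPolynomial.eval₂Hom (Int.castRingHom R) ![z₁, z₂, z₃, z₄]) (hf hX)

end baseChange

theorem numASM_ne_zero (n : ℕ) : numASM n ≠ 0 := by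
  classical
  have hone : asmMat (fun i j : Fin n => if i = j then (2 : Fin 3) else 1) =
      fun i j => if i = j then 1 else 0 := by
    funext i j
    simp only [asmMat]
    split_ifs <;> rfl
  refine (card_pos.2 ⟨fun i j => if i = j then 2 else 1, ?_⟩).ne'
  rw [mem_filter, hone]
  refine ⟨mem_univ _, fun i j => ?_, fun i j => ?_, fun i j => ?_, fun i => ?_, fun j => ?_⟩
  · dsimp only
    split_ifs <;> simp
  · rw [sum_ite_eq]
    split_ifs <;> simp
  · rw [sum_ite_eq']
    split_ifs <;> simp
  · simp
  · simp

theorem mul_Zbarqua_eq_cornerPartition {R : Type*} [CommRing R] (m : ℕ) (z₁ z₂ z₃ z₄ : R) :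
    (z₄ * z₁ - z₄ + 1) * (z₁ * z₂ - z₁ + 1) * (z₂ * z₃ - z₂ + 1) * (z₃ * z₄ - z₃ + 1) *
        Zbarqua (m + 3) 1 1 z₁ z₂ z₃ z₄ =
      z₁ * z₂ * z₃ * z₄ * cornerPartition (m + 1) z₁ z₂ z₃ z₄
      + (z₂ - 1) * (z₃ - 1) * (z₁ * z₂ - z₁ + 1) * (z₃ * z₄ - z₃ + 1) *
          z₄ * z₁ * z₂ ^ (m + 2) * Zopp (m + 2) 1 1 z₄ z₁
      + (z₃ - 1) * (z₄ - 1) * (z₂ * z₃ - z₂ + 1) * (z₄ * z₁ - z₄ + 1) *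
          z₁ * z₂ * z₃ ^ (m + 2) * Zopp (m + 2) 1 1 z₁ z₂
      + (z₄ - 1) * (z₁ - 1) * (z₃ * z₄ - z₃ + 1) * (z₁ * z₂ - z₁ + 1) *
          z₂ * z₃ * z₄ ^ (m + 2) * Zopp (m + 2) 1 1 z₂ z₃
      + (z₁ - 1) * (z₂ - 1) * (z₄ * z₁ - z₄ + 1) * (z₂ * z₃ - z₂ + 1) *
          z₃ * z₄ * z₁ ^ (m + 2) * Zopp (m + 2) 1 1 z₃ z₄
      + (z₁ - 1) * (z₂ - 1) * (z₃ - 1) * (z₄ - 1) *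
          ((z₁ * z₂ - z₁ + 1) * (z₃ * z₄ - z₃ + 1) * (z₂ * z₄) ^ (m + 2) +
           (z₂ * z₃ - z₂ + 1) * (z₄ * z₁ - z₄ + 1) * (z₁ * z₃) ^ (m + 2)) * numASM (m + 1) := by
  have h := mul_boundaryPartition_corners (m := m) z₁ z₂ z₃ z₄ (z₄ * z₁ - z₄ + 1)
    (z₁ * z₂ - z₁ + 1) (z₂ * z₃ - z₂ + 1) (z₃ * z₄ - z₃ + 1)
  simp only [boundaryPartition_eq_cornerPartition, cornerPartition_one_left,
    ← Zbarqua_eq_boundaryPartition] at h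
  rw [← cornerPartition] at h
  linear_combination h

theorem stmt10_general {K : Type*} [Field K] (n : ℕ) (hn : 3 ≤ n) {z₁ z₂ z₃ z₄ : K}
    (h₁₃ : z₁ ≠ z₃) (h₂₄ : z₂ ≠ z₄) (hA : (numASM (n - 2) : K) ≠ 0) :
    (z₄ * z₁ - z₄ + 1) * (z₁ * z₂ - z₁ + 1) * (z₂ * z₃ - z₂ + 1) * (z₃ * z₄ - z₃ + 1) *
        Zbarqua n 1 1 z₁ z₂ z₃ z₄ =
      z₁ * z₂ * z₃ * z₄ / (numASM (n - 2) * (z₁ - z₃) * (z₂ - z₄)) *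
        ((z₁ * z₂ - z₁ + 1) * (z₁ * z₂ - z₂ + 1) * (z₃ * z₄ - z₃ + 1) * (z₃ * z₄ - z₄ + 1) *
            Zopp (n - 1) 1 1 z₄ z₁ * Zopp (n - 1) 1 1 z₂ z₃ -
         (z₄ * z₁ - z₄ + 1) * (z₄ * z₁ - z₁ + 1) * (z₂ * z₃ - z₂ + 1) * (z₂ * z₃ - z₃ + 1) *
            Zopp (n - 1) 1 1 z₁ z₂ * Zopp (n - 1) 1 1 z₃ z₄)
      + (z₂ - 1) * (z₃ - 1) * (z₁ * z₂ - z₁ + 1) * (z₃ * z₄ - z₃ + 1) *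
          z₄ * z₁ * z₂ ^ (n - 1) * Zopp (n - 1) 1 1 z₄ z₁
      + (z₃ - 1) * (z₄ - 1) * (z₂ * z₃ - z₂ + 1) * (z₄ * z₁ - z₄ + 1) *
          z₁ * z₂ * z₃ ^ (n - 1) * Zopp (n - 1) 1 1 z₁ z₂
      + (z₄ - 1) * (z₁ - 1) * (z₃ * z₄ - z₃ + 1) * (z₁ * z₂ - z₁ + 1) *
          z₂ * z₃ * z₄ ^ (n - 1) * Zopp (n - 1) 1 1 z₂ z₃
      + (z₁ - 1) * (z₂ - 1) * (z₄ * z₁ - z₄ + 1) * (z₂ * z₃ - z₂ + 1) *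
          z₃ * z₄ * z₁ ^ (n - 1) * Zopp (n - 1) 1 1 z₃ z₄
      + (z₁ - 1) * (z₂ - 1) * (z₃ - 1) * (z₄ - 1) *
          ((z₁ * z₂ - z₁ + 1) * (z₃ * z₄ - z₃ + 1) * (z₂ * z₄) ^ (n - 1) +
           (z₂ * z₃ - z₂ + 1) * (z₄ * z₁ - z₄ + 1) * (z₁ * z₃) ^ (n - 1)) * numASM (n - 2) := by
  obtain ⟨m, rfl⟩ := Nat.exists_eq_add_of_le' hn
  simp only [Nat.reduceSubDiff] at hA ⊢
  have h₁₃' := sub_ne_zero.2 h₁₃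
  have h₂₄' := sub_ne_zero.2 h₂₄
  have hcorner : z₁ * z₂ * z₃ * z₄ * cornerPartition (m + 1) z₁ z₂ z₃ z₄ =
      z₁ * z₂ * z₃ * z₄ / (numASM (m + 1) * (z₁ - z₃) * (z₂ - z₄)) *
        (cornerPartition (m + 1) z₁ z₂ z₃ z₄ * numASM (m + 1) * ((z₁ - z₃) * (z₂ - z₄))) := by
    field_simp
  rw [mul_Zbarqua_eq_cornerPartition, hcorner, cornerPartition_mul_numASM]

theorem algebraMap_X_injective (σ R : Type*) [CommRing R] [Nontrivial R] :
    Function.Injective fun i : σ =>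
      algebraMap (MvPolynomial σ R) (FractionRing (MvPolynomial σ R)) (MvPolynomial.X i) :=
  (IsFractionRing.injective _ _).comp MvPolynomial.X_injective

/-- Identity for the alternative quadruply-refined ASM generating function at
`x = y = 1`, as an identity in the field of rational functions
`ℚ(z1,z2,z3,z4)`, where `numASM m` is the number of ASMs of size `m`. -/
theorem stmt10 (n : ℕ) (hn : 3 ≤ n) :
    (vz4 * vz1 - vz4 + 1) * (vz1 * vz2 - vz1 + 1) * (vz2 * vz3 - vz2 + 1) *
        (vz3 * vz4 - vz3 + 1) * Zbarqua n (1 : K4) 1 vz1 vz2 vz3 vz4 =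
      (vz1 * vz2 * vz3 * vz4 /
          ((numASM (n - 2) : K4) * (vz1 - vz3) * (vz2 - vz4))) *
        ((vz1 * vz2 - vz1 + 1) * (vz1 * vz2 - vz2 + 1) * (vz3 * vz4 - vz3 + 1) *
            (vz3 * vz4 - vz4 + 1) *
            Zopp (n - 1) (1 : K4) 1 vz4 vz1 * Zopp (n - 1) (1 : K4) 1 vz2 vz3 -
         (vz4 * vz1 - vz4 + 1) * (vz4 * vz1 - vz1 + 1) * (vz2 * vz3 - vz2 + 1) *
            (vz2 * vz3 - vz3 + 1) *
            Zopp (n - 1) (1 : K4) 1 vz1 vz2 * Zopp (n - 1) (1 : K4) 1 vz3 vz4)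
      + (vz2 - 1) * (vz3 - 1) * (vz1 * vz2 - vz1 + 1) * (vz3 * vz4 - vz3 + 1) *
          vz4 * vz1 * vz2 ^ (n - 1) * Zopp (n - 1) (1 : K4) 1 vz4 vz1
      + (vz3 - 1) * (vz4 - 1) * (vz2 * vz3 - vz2 + 1) * (vz4 * vz1 - vz4 + 1) *
          vz1 * vz2 * vz3 ^ (n - 1) * Zopp (n - 1) (1 : K4) 1 vz1 vz2
      + (vz4 - 1) * (vz1 - 1) * (vz3 * vz4 - vz3 + 1) * (vz1 * vz2 - vz1 + 1) *
          vz2 * vz3 * vz4 ^ (n - 1) * Zopp (n - 1) (1 : K4) 1 vz2 vz3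
      + (vz1 - 1) * (vz2 - 1) * (vz4 * vz1 - vz4 + 1) * (vz2 * vz3 - vz2 + 1) *
          vz3 * vz4 * vz1 ^ (n - 1) * Zopp (n - 1) (1 : K4) 1 vz3 vz4
      + (vz1 - 1) * (vz2 - 1) * (vz3 - 1) * (vz4 - 1) *
          ((vz1 * vz2 - vz1 + 1) * (vz3 * vz4 - vz3 + 1) * (vz2 * vz4) ^ (n - 1) +
           (vz2 * vz3 - vz2 + 1) * (vz4 * vz1 - vz4 + 1) * (vz1 * vz3) ^ (n - 1)) *
          (numASM (n - 2) : K4) := by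
  exact stmt10_general n hn ((algebraMap_X_injective _ _).ne (by decide : (0 : Fin 4) ≠ 2))
    ((algebraMap_X_injective _ _).ne (by decide : (1 : Fin 4) ≠ 3))
    (Nat.cast_ne_zero.2 (numASM_ne_zero _))
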